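/- arXiv:math/0511156 — 3 statements merged into one kernel-verified Lean document; each statement's English description precedes it below -/
import Mathlib

section
/- Let N ≥ 3 and let V satisfy condition (V), the decay condition that there exist A, α > 0 with V⁺(x) ≤ A|x|^{-2-α} for all x ∈ ℝ^N, and the condition |x|^{2(N-1)/N} V₂(x) → 0 as x → 0. Then Λ := lim_{R→∞} λ₁(R) is strictly positive. -/
open MeasureTheory Filter Metric Set
open scoped ENNReal NNReal Topology

noncomputable section

/-- Euclidean space `ℝ^N`. -/
abbrev Euc (N : ℕ) := EuclideanSpace ℝ (Fin N)

/-- The Laplace operator on `ℝ^N`: the sum of the second partial derivatives. -/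
def lap (N : ℕ) (u : Euc N → ℝ) (x : Euc N) : ℝ :=
  ∑ i : Fin N,
    fderiv ℝ (fun y => fderiv ℝ u y (EuclideanSpace.single i 1)) x (EuclideanSpace.single i 1)

/-- The principal eigenvalue `λ₁(R)`: the infimum of `∫_{B_R} |∇u|²` over smooth functions
compactly supported in the open ball `B_R` with `∫_{B_R} V u² = 1`. -/
def lam1 (N : ℕ) (V : Euc N → ℝ) (R : ℝ) : ℝ :=
  sInf { t : ℝ | ∃ u : Euc N → ℝ, ContDiff ℝ (⊤ : ℕ∞) u ∧ HasCompactSupport u ∧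
    tsupport u ⊆ ball (0 : Euc N) R ∧
    (∫ x, V x * u x ^ 2) = 1 ∧ t = ∫ x, ‖gradient u x‖ ^ 2 }

/-- `Λ := lim_{R → ∞} λ₁(R)`. -/
def Lam (N : ℕ) (V : Euc N → ℝ) : ℝ := limUnder atTop (lam1 N V)

/-- Condition (V): `V` is a bounded Hölder-continuous function whose positive part
`V⁺ = max(V, 0)` is nontrivial and decomposes as `V₁ + V₂` with `V₁ ∈ L^{N/2}` and
`|x|² V₂(x) → 0` as `|x| → ∞`. -/
def CondV (N : ℕ) (V V₁ V₂ : Euc N → ℝ) : Prop :=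
  (∃ C β : ℝ≥0, 0 < β ∧ β ≤ 1 ∧ HolderWith C β V) ∧
  (∃ C : ℝ, ∀ x, |V x| ≤ C) ∧
  (∃ x, 0 < V x) ∧
  (∀ x, max (V x) 0 = V₁ x + V₂ x) ∧
  MemLp V₁ ((N : ℝ≥0∞) / 2) volume ∧
  Tendsto (fun x : Euc N => ‖x‖ ^ 2 * V₂ x) (cocompact _) (𝓝 0)

/-- The decay condition: `V⁺(x) ≤ A |x|^{-2-α}`. -/
def CondVDecay (N : ℕ) (V : Euc N → ℝ) : Prop :=
  ∃ A α : ℝ, 0 < A ∧ 0 < α ∧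
    ∀ x : Euc N, x ≠ 0 → max (V x) 0 ≤ A * ‖x‖ ^ (-2 - α)

/-- Conditions (f1), (f2), (f3) on the absorption term `f`. -/
def CondF (N : ℕ) (V : Euc N → ℝ) (f : ℝ → ℝ) : Prop :=
  ContDiff ℝ 1 f ∧ (∀ u : ℝ, 0 ≤ u → 0 ≤ f u) ∧
  -- (f1)
  f 0 = 0 ∧ deriv f 0 = 0 ∧
  0 < Filter.liminf (fun u : ℝ => ((deriv f u / u : ℝ) : EReal)) (𝓝[>] (0 : ℝ)) ∧
  -- (f2)
  StrictMonoOn (fun u : ℝ => f u / u) (Ioi 0) ∧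
  -- (f3)
  (∃ L : EReal, Tendsto (fun u : ℝ => ((f u / u : ℝ) : EReal)) atTop (𝓝 L) ∧
    ((⨆ x, |V x| : ℝ) : EReal) < L)

/-- A solution of problem `(P_λ)`: a positive `C²` function solving the logistic equation
and decaying to zero at infinity. -/
structure IsSolution (N : ℕ) (V : Euc N → ℝ) (f : ℝ → ℝ) (lam : ℝ) (u : Euc N → ℝ) : Prop where
  smooth : ContDiff ℝ 2 u
  pos : ∀ x, 0 < u x
  eqn : ∀ x, -lap N u x = lam * (V x * u x - f (u x))
  decay : Tendsto u (cocompact (Euc N)) (𝓝 0)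

/-- The surface integral `∫_{∂B_R} g dσ` over the sphere of radius `R`, written in polar
coordinates with respect to the canonical surface measure on the unit sphere. -/
def sphereInt (N : ℕ) (g : Euc N → ℝ) (R : ℝ) : ℝ :=
  ∫ ω : sphere (0 : Euc N) 1, g (R • (ω : Euc N)) * R ^ (N - 1)
    ∂((volume : Measure (Euc N)).toSphere)



lemma hardy_aux (N : ℕ) (hN : 3 ≤ N) (u : Euc N → ℝ) (hu : ContDiff ℝ (⊤ : ℕ∞) u)
    (hc : HasCompactSupport u) :
    Integrable (fun x => u x ^ 2 * (1 + ‖x‖ ^ 2)⁻¹) ∧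
    (∫ x, u x ^ 2 * (1 + ‖x‖ ^ 2)⁻¹) ≤ 4 * ∫ x, ‖gradient u x‖ ^ 2 := by
  have hpos : ∀ x : Euc N, 0 < 1 + ‖x‖ ^ 2 := fun x => by positivity
  set w : Euc N → ℝ := fun x => (1 + ‖x‖ ^ 2)⁻¹ with hw
  have hq : ContDiff ℝ (⊤ : ℕ∞) (fun x : Euc N => 1 + ‖x‖ ^ 2) :=
    contDiff_const.add (contDiff_norm_sq ℝ)
  have hwc : ContDiff ℝ (⊤ : ℕ∞) w := hq.inv (fun x => (hpos x).ne')
  set h : Euc N → ℝ := fun x => u x ^ 2 * w x with hh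
  have hhc : ContDiff ℝ (⊤ : ℕ∞) h := (hu.pow 2).mul hwc
  have hhs : HasCompactSupport h := by
    apply hc.mono
    intro x hx hux
    apply hx
    simp [hh, hux]
  have hhd : Differentiable ℝ h := hhc.differentiable (by simp)
  have hud : Differentiable ℝ u := hu.differentiable (by simp)
  have hfc : Continuous (fderiv ℝ h) := hhc.continuous_fderiv (by simp)
  have hfs : HasCompactSupport (fderiv ℝ h) := hhs.fderiv ℝ
  have hint : Integrable h := hhc.continuous.integrable_of_hasCompactSupport hhs
  refine ⟨hint, ?_⟩
  have hgc : Continuous (fun x => ‖gradient u x‖ ^ 2) := by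
    have : Continuous (gradient u) :=
      (InnerProductSpace.toDual ℝ (Euc N)).symm.continuous.comp (hu.continuous_fderiv (by simp))
    fun_prop
  have hgs : HasCompactSupport (fun x => ‖gradient u x‖ ^ 2) := by
    apply (hc.fderiv ℝ).mono
    intro x hx hux
    apply hx
    simp [gradient, hux]
  have hgi : Integrable (fun x => ‖gradient u x‖ ^ 2) :=
    hgc.integrable_of_hasCompactSupport hgs
  have hparts : ∀ i : Fin N, Integrable (fun x : Euc N => x i * fderiv ℝ h x (EuclideanSpace.single i 1)) ∧
      ∫ x : Euc N, x i * fderiv ℝ h x (EuclideanSpace.single i 1) = - ∫ x, h x := by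
    intro i
    have hproj : ∀ x : Euc N, HasFDerivAt (fun y : Euc N => y i)
        (EuclideanSpace.proj i : Euc N →L[ℝ] ℝ) x := fun x =>
      (EuclideanSpace.proj i : Euc N →L[ℝ] ℝ).hasFDerivAt
    have e : ∀ x : Euc N, fderiv ℝ (fun y : Euc N => y i) x (EuclideanSpace.single i 1) = 1 := by
      intro x
      rw [(hproj x).fderiv]
      simp
    have hi1 : Integrable (fun x : Euc N => x i * fderiv ℝ h x (EuclideanSpace.single i 1)) := by
      apply Continuous.integrable_of_hasCompactSupport
      · fun_prop
      · apply hfs.mono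
        intro x hx hux
        apply hx
        simp [hux]
    refine ⟨hi1, ?_⟩
    rw [integral_mul_fderiv_eq_neg_fderiv_mul_of_integrable]
    · simp only [e, one_mul]
    · simpa only [e, one_mul] using hint
    · exact hi1
    · apply Continuous.integrable_of_hasCompactSupport
      · exact Continuous.mul (by fun_prop) hhc.continuous
      · apply hhs.mono
        intro x hx hux
        apply hx
        simp [hux]
    · exact fun x _ => (hproj x).differentiableAt
    · exact fun x _ => hhd x
  have hsum : ∀ x : Euc N, ∑ i, x i * fderiv ℝ h x (EuclideanSpace.single i 1) = fderiv ℝ h x x := by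
    intro x
    generalize fderiv ℝ h x = L
    conv_rhs => rw [← (EuclideanSpace.basisFun (Fin N) ℝ).sum_repr x]
    rw [map_sum]
    simp
  have hI : ∫ x, fderiv ℝ h x x = - (N * ∫ x, h x) := by
    simp_rw [← hsum]
    rw [integral_finsetSum _ (fun i _ => (hparts i).1)]
    simp [(fun i => (hparts i).2)]
  have hder : ∀ x, fderiv ℝ h x x = 2 * u x * w x * fderiv ℝ u x x
      - 2 * u x ^ 2 * w x ^ 2 * ‖x‖ ^ 2 := by
    intro x
    have h1 : HasFDerivAt (fun y : Euc N => 1 + ‖y‖ ^ 2) (2 • innerSL ℝ x) x :=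
      (hasStrictFDerivAt_norm_sq x).hasFDerivAt.const_add 1
    have h2 := (hasDerivAt_inv (hpos x).ne').comp_hasFDerivAt x h1
    have h3 := ((hud x).hasFDerivAt.pow 2).mul h2
    have h4 : HasFDerivAt h _ x := h3
    rw [h4.fderiv]
    simp [hw]
    ring
  have hpt : ∀ x, -(fderiv ℝ h x x) ≤ (5 / 2) * h x + 2 * ‖gradient u x‖ ^ 2 := by
    intro x
    have hng : ‖gradient u x‖ = ‖fderiv ℝ u x‖ := by simp [gradient]
    have hb : |fderiv ℝ u x x| ≤ ‖fderiv ℝ u x‖ * ‖x‖ := (fderiv ℝ u x).le_opNorm x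
    have hw0 : 0 < w x := inv_pos.mpr (hpos x)
    have hwx : w x * ‖x‖ ^ 2 ≤ 1 := by
      rw [hw]; simp only
      rw [inv_mul_le_iff₀ (hpos x)]; linarith
    have e1 : u x ^ 2 * w x ^ 2 * ‖x‖ ^ 2 ≤ h x := by
      have : u x ^ 2 * w x * (w x * ‖x‖ ^ 2) ≤ u x ^ 2 * w x * 1 := by gcongr
      calc _ = u x ^ 2 * w x * (w x * ‖x‖ ^ 2) := by ring
        _ ≤ _ := by simpa [hh] using this
    have e2 : -(u x * w x * fderiv ℝ u x x) ≤ (|u x| * w x * ‖x‖) * ‖fderiv ℝ u x‖ := by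
      calc _ ≤ |u x * w x * fderiv ℝ u x x| := neg_le_abs _
        _ = |u x| * w x * |fderiv ℝ u x x| := by rw [abs_mul, abs_mul, abs_of_pos hw0]
        _ ≤ |u x| * w x * (‖fderiv ℝ u x‖ * ‖x‖) := by gcongr
        _ = _ := by ring
    have e3 : (|u x| * w x * ‖x‖) ^ 2 = u x ^ 2 * w x ^ 2 * ‖x‖ ^ 2 := by
      rw [mul_pow, mul_pow, sq_abs]
    rw [hder, hng]
    nlinarith [sq_nonneg ((|u x| * w x * ‖x‖) - 2 * ‖fderiv ℝ u x‖)]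
  have hii : Integrable (fun x => fderiv ℝ h x x) := by
    simp_rw [← hsum]
    exact integrable_finsetSum _ (fun i _ => (hparts i).1)
  have hfin := integral_mono hii.neg ((hint.const_mul (5/2)).add (hgi.const_mul 2)) hpt
  simp only [Pi.neg_apply, Pi.add_apply] at hfin
  rw [integral_neg, hI, integral_add (hint.const_mul (5/2)) (hgi.const_mul 2),
    integral_const_mul, integral_const_mul] at hfin
  have hN' : (3 : ℝ) ≤ N := by exact_mod_cast hN
  have h0 : 0 ≤ ∫ x, h x := integral_nonneg (fun x => by
    have := hpos x
    simp only [hh, hw]; positivity)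
  change (∫ x, h x) ≤ _
  nlinarith [mul_le_mul_of_nonneg_right hN' h0]

/-- under condition (V), the decay condition, and
`|x|^{2(N-1)/N} V₂(x) → 0` as `x → 0`, the limit `Λ` is strictly positive. -/
theorem stmt0 (N : ℕ) (hN : 3 ≤ N) (V V₁ V₂ : Euc N → ℝ)
    (hV : CondV N V V₁ V₂) (hdec : CondVDecay N V)
    (hV2zero : Tendsto (fun x : Euc N => ‖x‖ ^ (2 * ((N : ℝ) - 1) / N) * V₂ x)
      (𝓝[≠] (0 : Euc N)) (𝓝 0)) :
    0 < Lam N V := by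
  obtain ⟨⟨C, β, hβ, -, hH⟩, ⟨M, hM⟩, ⟨x₀, hx₀⟩, -⟩ := hV
  obtain ⟨A, α, hA, hα, hdec⟩ := hdec
  have hVc : Continuous V := hH.continuous hβ
  have hM0 : 0 < M := by
    have := hM x₀
    rw [abs_of_pos hx₀] at this
    linarith
  set K : ℝ := 2 * (M + A) with hK
  have hKpos : 0 < K := by positivity
  have hVK : ∀ x, V x ≤ K * (1 + ‖x‖ ^ 2)⁻¹ := by
    intro x
    have hp : 0 < 1 + ‖x‖ ^ 2 := by positivity
    rw [← div_eq_mul_inv, le_div_iff₀ hp]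
    rcases le_total ‖x‖ 1 with h1 | h1
    · have : V x ≤ M := (le_abs_self _).trans (hM x)
      have h2 : ‖x‖ ^ 2 ≤ 1 := pow_le_one₀ (norm_nonneg x) h1
      calc V x * (1 + ‖x‖ ^ 2) ≤ M * (1 + 1) := by gcongr
        _ ≤ K := by rw [hK]; linarith
    · have hx : x ≠ 0 := by
        rintro rfl
        norm_num at h1
      have hxp : 0 < ‖x‖ := by positivity
      have h3 : V x ≤ A * ‖x‖ ^ (-2 : ℝ) := by
        calc V x ≤ max (V x) 0 := le_max_left _ _
          _ ≤ A * ‖x‖ ^ (-2 - α) := hdec x hx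
          _ ≤ A * ‖x‖ ^ (-2 : ℝ) := by
            gcongr
            linarith
      have h4 : ‖x‖ ^ (-2 : ℝ) = (‖x‖ ^ 2)⁻¹ := by
        rw [Real.rpow_neg hxp.le]; norm_num
      have h5 : 1 ≤ ‖x‖ ^ 2 := one_le_pow₀ h1
      rw [h4] at h3
      calc V x * (1 + ‖x‖ ^ 2) ≤ (A * (‖x‖ ^ 2)⁻¹) * (‖x‖ ^ 2 + ‖x‖ ^ 2) := by
            apply mul_le_mul h3 (by linarith) hp.le (by positivity)
        _ = 2 * A := by field_simp; ring
        _ ≤ K := by rw [hK]; linarith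
  set S : ℝ → Set ℝ := fun R => { t : ℝ | ∃ u : Euc N → ℝ, ContDiff ℝ (⊤ : ℕ∞) u ∧
    HasCompactSupport u ∧ tsupport u ⊆ ball (0 : Euc N) R ∧
    (∫ x, V x * u x ^ 2) = 1 ∧ t = ∫ x, ‖gradient u x‖ ^ 2 } with hS
  have hlam : ∀ R, lam1 N V R = sInf (S R) := fun R => rfl
  have hlow : ∀ R, ∀ t ∈ S R, (4 * K)⁻¹ ≤ t := by
    rintro R t ⟨u, hu, hc, -, h1, rfl⟩
    obtain ⟨hi, hle⟩ := hardy_aux N hN u hu hc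
    have hVi : Integrable (fun x => V x * u x ^ 2) := by
      apply Continuous.integrable_of_hasCompactSupport
      · exact hVc.mul (hu.continuous.pow 2)
      · apply hc.mono
        intro x hx hux
        apply hx
        simp [hux]
    have h2 := integral_mono hVi (hi.const_mul K) (fun x => by
      have := mul_le_mul_of_nonneg_right (hVK x) (sq_nonneg (u x))
      simp only
      linarith)
    rw [h1, integral_const_mul] at h2
    rw [inv_le_iff_one_le_mul₀ (by positivity)]
    nlinarith
  obtain ⟨R₀, hne⟩ : ∃ R₀, (S R₀).Nonempty := by
    obtain ⟨δ, hδ, hball⟩ := Metric.isOpen_iff.mp (isOpen_lt continuous_const hVc) x₀ hx₀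
    let f : ContDiffBump x₀ := ⟨δ / 2, δ, by positivity, by linarith⟩
    have hfc : ContDiff ℝ (⊤ : ℕ∞) (f : Euc N → ℝ) := f.contDiff
    have hVfc : Continuous (fun x => V x * f x ^ 2) := hVc.mul (hfc.continuous.pow 2)
    have hs : 0 < ∫ x, V x * f x ^ 2 := by
      apply hVfc.integral_pos_of_hasCompactSupport_nonneg_nonzero
        (x := x₀)
      · apply f.hasCompactSupport.mono
        intro x hx hux
        apply hx
        simp [hux]
      · intro x
        by_cases hx : x ∈ ball x₀ δ
        · have : 0 < V x := hball hx
          simp only [Pi.zero_apply]; positivity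
        · have : f x = 0 := f.zero_of_le_dist (by simpa using hx)
          simp [this]
      · have : f x₀ = 1 := f.one_of_mem_closedBall (by simp [f.rIn_pos.le])
        simp [this, hx₀.ne']
    set s := ∫ x, V x * f x ^ 2
    have hsupp : tsupport (fun x => (√s)⁻¹ * f x) ⊆ closedBall x₀ δ := by
      rw [← f.tsupport_eq]
      apply closure_mono
      intro x hx hux
      apply hx
      simp [hux]
    refine ⟨‖x₀‖ + δ + 1, _, fun x => (√s)⁻¹ * f x, contDiff_const.mul hfc,
      f.hasCompactSupport.mul_left, ?_, ?_, rfl⟩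
    · intro x hx
      have := hsupp hx
      rw [mem_closedBall, dist_eq_norm] at this
      rw [mem_ball_zero_iff]
      have := norm_le_norm_add_norm_sub' x x₀
      linarith
    · have : ∀ x, V x * ((√s)⁻¹ * f x) ^ 2 = s⁻¹ * (V x * f x ^ 2) := by
        intro x
        rw [mul_pow, inv_pow, Real.sq_sqrt hs.le]; ring
      simp_rw [this]
      rw [integral_const_mul]
      exact inv_mul_cancel₀ hs.ne'
  have hSmono : Monotone S := by
    rintro R R' hRR t ⟨u, hu, hc, hsu, h⟩
    exact ⟨u, hu, hc, hsu.trans (ball_subset_ball hRR), h⟩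
  have hbdd : ∀ R, BddBelow (S R) := fun R => ⟨_, hlow R⟩
  have hne' : ∀ R, R₀ ≤ R → (S R).Nonempty := fun R hR => hne.mono (hSmono hR)
  have hanti : Antitone (fun R => lam1 N V (max R R₀)) := by
    intro R R' hRR
    simp only [hlam]
    exact csInf_le_csInf (hbdd _) (hne' _ (le_max_right _ _)) (hSmono (max_le_max_right _ hRR))
  have hlb : ∀ R, (4 * K)⁻¹ ≤ lam1 N V (max R R₀) := fun R => by
    rw [hlam]
    exact le_csInf (hne' _ (le_max_right _ _)) (hlow _)
  have ht := tendsto_atTop_ciInf hanti ⟨(4 * K)⁻¹, by rintro _ ⟨R, rfl⟩; exact hlb R⟩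
  have ht' : Tendsto (lam1 N V) atTop (𝓝 (⨅ R, lam1 N V (max R R₀))) := by
    apply ht.congr'
    filter_upwards [eventually_ge_atTop R₀] with R hR
    rw [max_eq_left hR]
  have : Lam N V = ⨅ R, lam1 N V (max R R₀) := ht'.limUnder_eq
  rw [this]
  exact lt_of_lt_of_le (by positivity) (le_ciInf hlb)

end
end

section
/- Let N ≥ 3, let V satisfy condition (V) and the decay condition that there exist A, α > 0 with V⁺(x) ≤ A|x|^{-2-α} for all x ∈ ℝ^N, and let f satisfy conditions (f1), (f2), (f3). Then for every λ > Λ, problem (P_λ) has at least one solution. -/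
open MeasureTheory Filter Metric Set
open scoped ENNReal NNReal Topology

noncomputable section

set_option linter.unusedSectionVars false

section kernel
variable {N : ℕ} {F : Type*} [NormedAddCommGroup F] [NormedSpace ℝ F] [CompleteSpace F]

def Dec (N : ℕ) {F : Type*} [NormedAddCommGroup F] (ψ : Euc N → F) : Prop :=
  Continuous ψ ∧ ∃ C : ℝ, 0 ≤ C ∧ ∀ z, ‖ψ z‖ ≤ C * (1 + ‖z‖) ^ (-((N : ℝ) + 2))

def TT (N : ℕ) {F : Type*} [NormedAddCommGroup F] [NormedSpace ℝ F]
    (ψ : Euc N → F) (g : Euc N → ℝ) (s : ℝ) (x : Euc N) : F :=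
  ∫ z, g (x + s • z) • ψ z

theorem Dec.integrable {ψ : Euc N → F} (h : Dec N ψ) : Integrable ψ := by
  obtain ⟨hc, C, hC, hb⟩ := h
  have h1 : Integrable (fun z : Euc N => C * (1 + ‖z‖) ^ (-((N : ℝ) + 2))) := by
    apply Integrable.const_mul
    apply integrable_one_add_norm
    simp
  exact h1.mono' hc.aestronglyMeasurable (ae_of_all _ hb)

theorem Dec.integrable_mul {ψ : Euc N → F} (h : Dec N ψ) :
    Integrable (fun z => (1 + ‖z‖) * ‖ψ z‖) := by
  obtain ⟨hc, C, hC, hb⟩ := h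
  have h1 : Integrable (fun z : Euc N => C * (1 + ‖z‖) ^ (-((N : ℝ) + 1))) := by
    apply Integrable.const_mul
    apply integrable_one_add_norm
    simp
  refine h1.mono' (by fun_prop) (ae_of_all _ fun z => ?_)
  have h0 : 0 < 1 + ‖z‖ := by positivity
  rw [Real.norm_of_nonneg (by positivity)]
  calc (1 + ‖z‖) * ‖ψ z‖ ≤ (1 + ‖z‖) * (C * (1 + ‖z‖) ^ (-((N : ℝ) + 2))) := by
        gcongr; exact hb z
    _ = C * ((1 + ‖z‖) ^ (1:ℝ) * (1 + ‖z‖) ^ (-((N : ℝ) + 2))) := by rw [Real.rpow_one]; ring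
    _ = _ := by rw [← Real.rpow_add h0]; congr 2; ring

/-- comparison of the decay weights -/
theorem wt_le {a b c : ℝ} (ha : 0 ≤ a) (hb : 0 ≤ b) (hc : 0 < c) (h : 1 + b ≤ c * (1 + a)) (N : ℕ) :
    (1 + a) ^ (-((N : ℝ) + 2)) ≤ c ^ ((N:ℝ) + 2) * (1 + b) ^ (-((N : ℝ) + 2)) := by
  have h1 : (0:ℝ) < 1 + a := by positivity
  have h2 : (0:ℝ) < 1 + b := by positivity
  rw [Real.rpow_neg h1.le, Real.rpow_neg h2.le, ← div_eq_mul_inv, inv_eq_one_div,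
    div_le_div_iff₀ (by positivity) (by positivity), one_mul, ← Real.mul_rpow hc.le h1.le]
  exact Real.rpow_le_rpow h2.le h (by positivity)

theorem TT_eq (ψ : Euc N → F) (g : Euc N → ℝ) {s : ℝ} (hs : 0 < s) (x : Euc N) :
    TT N ψ g s x = ∫ y, g y • ((s ^ N)⁻¹ • ψ (s⁻¹ • (y - x))) := by
  have h1 : ∫ y, g y • ((s ^ N)⁻¹ • ψ (s⁻¹ • (y - x)))
      = ∫ y, g (x + y) • ((s ^ N)⁻¹ • ψ (s⁻¹ • y)) := by
    rw [← integral_add_left_eq_self _ x]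
    simp
  have h2 := Measure.integral_comp_smul (volume : Measure (Euc N))
    (fun y => g (x + y) • ((s ^ N)⁻¹ • ψ (s⁻¹ • y))) s
  rw [h1]
  have hsN : 0 < s ^ N := by positivity
  simp only [smul_smul, inv_mul_cancel₀ hs.ne', one_smul, finrank_euclideanSpace, Fintype.card_fin,
    abs_of_pos (inv_pos.2 hsN)] at h2
  rw [eq_inv_smul_iff₀ hsN.ne', ← integral_smul] at h2
  simp only [smul_smul]
  rw [← h2, TT]
  congr 1; ext z
  rw [smul_smul]; congr 1; field_simp

theorem TT_hasFDerivAt {ψ : Euc N → F} {ψ' : Euc N → (Euc N →L[ℝ] F)}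
    (hψ : Dec N ψ) (hψ' : Dec N ψ') (hd : ∀ z, HasFDerivAt ψ (ψ' z) z)
    {g : Euc N → ℝ} (hg : Measurable g) {B : ℝ} (hB : ∀ x, |g x| ≤ B)
    {s : ℝ} (hs : 0 < s) (x : Euc N) :
    HasFDerivAt (TT N ψ g s) (-(s⁻¹) • TT N ψ' g s x) x := by
  have hB0 : 0 ≤ B := (abs_nonneg _).trans (hB 0)
  have e1 : TT N ψ g s = fun x => ∫ y, g y • ((s ^ N)⁻¹ • ψ (s⁻¹ • (y - x))) := by
    ext x; exact TT_eq ψ g hs x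
  obtain ⟨C, hC, hb⟩ := hψ'.2
  have e2 : -(s⁻¹) • TT N ψ' g s x
      = ∫ y, g y • ((s ^ N)⁻¹ • (-(s⁻¹) • ψ' (s⁻¹ • (y - x)))) := by
    rw [TT_eq ψ' g hs x, ← integral_smul]
    congr 1; ext1 y
    simp only [smul_smul]; congr 1; ring
  rw [e1, e2]
  apply hasFDerivAt_integral_of_dominated_of_fderiv_le
    (F' := fun x y => g y • ((s ^ N)⁻¹ • (-(s⁻¹) • ψ' (s⁻¹ • (y - x))))) (s := ball x s)
    (bound := fun y => B * ((s^N)⁻¹ * (s⁻¹ * (C * ((2:ℝ) ^ ((N:ℝ)+2) *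
      (1 + ‖s⁻¹ • (y - x)‖) ^ (-((N:ℝ)+2)))))))
  · exact ball_mem_nhds x hs
  · refine Eventually.of_forall fun x' => ?_
    have := hψ.1
    exact hg.aestronglyMeasurable.smul (Continuous.aestronglyMeasurable (by fun_prop))
  · have h1 : Integrable (fun y => (s ^ N)⁻¹ • ψ (s⁻¹ • (y - x))) := by
      apply Integrable.smul
      exact (hψ.integrable.comp_smul (inv_ne_zero hs.ne')).comp_sub_right x
    exact h1.bdd_smul B hg.aestronglyMeasurable (ae_of_all _ (by simpa using hB))
  · have := hψ'.1
    exact hg.aestronglyMeasurable.smul (Continuous.aestronglyMeasurable (by fun_prop))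
  · refine ae_of_all _ fun y x' hx' => ?_
    rw [norm_smul, norm_smul, norm_smul, Real.norm_eq_abs, Real.norm_eq_abs, norm_neg,
      Real.norm_eq_abs, abs_of_pos (inv_pos.2 hs), abs_of_pos (by positivity : 0 < (s^N)⁻¹)]
    gcongr
    · exact hB y
    · refine (hb _).trans ?_
      gcongr
      apply wt_le (norm_nonneg _) (norm_nonneg _) two_pos
      have h3 : ‖s⁻¹ • (y - x)‖ ≤ ‖s⁻¹ • (y - x')‖ + 1 := by
        have : s⁻¹ • (y - x) = s⁻¹ • (y - x') + s⁻¹ • (x' - x) := by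
          rw [← smul_add]; congr 1; abel
        rw [this]
        refine (norm_add_le _ _).trans ?_
        gcongr
        rw [norm_smul, Real.norm_eq_abs, abs_of_pos (inv_pos.2 hs), inv_mul_le_iff₀ hs, mul_one]
        rw [mem_ball, dist_eq_norm] at hx'
        exact hx'.le
      linarith [norm_nonneg (s⁻¹ • (y - x'))]
  · apply Integrable.const_mul
    apply Integrable.const_mul
    apply Integrable.const_mul
    apply Integrable.const_mul
    apply Integrable.const_mul
    have : Integrable (fun z : Euc N => (1 + ‖z‖) ^ (-((N : ℝ) + 2))) := by
      apply integrable_one_add_norm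
      simp
    exact (this.comp_smul (inv_ne_zero hs.ne')).comp_sub_right x
  · refine ae_of_all _ fun y x' hx' => ?_
    refine HasFDerivAt.const_smul (HasFDerivAt.const_smul ?_ _) _
    have h1 : HasFDerivAt (fun x' : Euc N => s⁻¹ • (y - x'))
        (s⁻¹ • (-ContinuousLinearMap.id ℝ (Euc N))) x' := by
      have := ((hasFDerivAt_id (𝕜 := ℝ) x').const_sub y).const_smul s⁻¹
      exact this
    have h2 := (hd (s⁻¹ • (y - x'))).comp x' h1
    refine h2.congr_fderiv ?_
    refine ContinuousLinearMap.ext fun v => ?_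
    simp

theorem TT_hasDerivAt {ψ : Euc N → F} {ψ' : Euc N → (Euc N →L[ℝ] F)}
    (hψ : Dec N ψ) {χ : Euc N → F} (hχ : Dec N χ) (hχe : ∀ z, χ z = -((N:ℝ) • ψ z) - ψ' z z)
    (hd : ∀ z, HasFDerivAt ψ (ψ' z) z)
    {g : Euc N → ℝ} (hg : Measurable g) {B : ℝ} (hB : ∀ x, |g x| ≤ B)
    {s : ℝ} (hs : 0 < s) (x : Euc N) :
    HasDerivAt (fun s => TT N ψ g s x) (s⁻¹ • TT N χ g s x) s := by
  have hB0 : 0 ≤ B := (abs_nonneg _).trans (hB 0)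
  have e1 : (fun s => TT N ψ g s x) =ᶠ[𝓝 s]
      fun s => ∫ y, g y • ((s ^ N)⁻¹ • ψ (s⁻¹ • (y - x))) := by
    filter_upwards [lt_mem_nhds hs] with s hs
    exact TT_eq ψ g hs x
  obtain ⟨C, hC, hb⟩ := hχ.2
  have e2 : s⁻¹ • TT N χ g s x
      = ∫ y, g y • ((s⁻¹ * (s ^ N)⁻¹) • χ (s⁻¹ • (y - x))) := by
    rw [TT_eq χ g hs x, ← integral_smul]
    congr 1; ext1 y
    simp only [smul_smul]; congr 1; ring
  rw [e2]
  refine HasDerivAt.congr_of_eventuallyEq ?_ e1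
  have hball : ∀ t ∈ ball s (s/2), s/2 < t ∧ t < 2 * s := by
    intro t ht
    rw [mem_ball, Real.dist_eq, abs_lt] at ht
    constructor <;> linarith
  refine (hasDerivAt_integral_of_dominated_loc_of_deriv_le
    (F' := fun t y => g y • ((t⁻¹ * (t ^ N)⁻¹) • χ (t⁻¹ • (y - x)))) (s := ball s (s/2))
    (bound := fun y => B * (((s/2)⁻¹ * ((s/2)^N)⁻¹) * (C * ((2:ℝ) ^ ((N:ℝ)+2) *
      (1 + ‖s⁻¹ • (y - x)‖) ^ (-((N:ℝ)+2)))))) ?_ ?_ ?_ ?_ ?_ ?_ ?_).2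
  · exact ball_mem_nhds s (by positivity)
  · refine Eventually.of_forall fun x' => ?_
    have := hψ.1
    exact hg.aestronglyMeasurable.smul (Continuous.aestronglyMeasurable (by fun_prop))
  · have h1 : Integrable (fun y => (s ^ N)⁻¹ • ψ (s⁻¹ • (y - x))) := by
      apply Integrable.smul
      exact (hψ.integrable.comp_smul (inv_ne_zero hs.ne')).comp_sub_right x
    exact h1.bdd_smul B hg.aestronglyMeasurable (ae_of_all _ (by simpa using hB))
  · have := hχ.1
    exact hg.aestronglyMeasurable.smul (Continuous.aestronglyMeasurable (by fun_prop))
  · refine ae_of_all _ fun y t ht => ?_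
    obtain ⟨ht1, ht2⟩ := hball t ht
    have ht0 : 0 < t := by linarith
    rw [norm_smul, norm_smul, Real.norm_eq_abs, Real.norm_eq_abs,
      abs_of_pos (by positivity : 0 < t⁻¹ * (t^N)⁻¹)]
    gcongr
    · exact hB y
    · refine (hb _).trans ?_
      gcongr
      apply wt_le (norm_nonneg _) (norm_nonneg _) two_pos
      have h3 : ‖s⁻¹ • (y - x)‖ ≤ 2 * ‖t⁻¹ • (y - x)‖ := by
        rw [norm_smul, norm_smul, Real.norm_eq_abs, Real.norm_eq_abs, abs_of_pos (inv_pos.2 hs),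
          abs_of_pos (inv_pos.2 ht0), ← mul_assoc]
        gcongr
        rw [inv_eq_one_div, ← div_eq_mul_inv, div_le_div_iff₀ hs ht0]
        linarith
      linarith [norm_nonneg (s⁻¹ • (y - x))]
  · apply Integrable.const_mul
    apply Integrable.const_mul
    apply Integrable.const_mul
    apply Integrable.const_mul
    have : Integrable (fun z : Euc N => (1 + ‖z‖) ^ (-((N : ℝ) + 2))) := by
      apply integrable_one_add_norm
      simp
    exact (this.comp_smul (inv_ne_zero hs.ne')).comp_sub_right x
  · refine ae_of_all _ fun y t ht => ?_
    obtain ⟨ht1, ht2⟩ := hball t ht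
    have ht0 : 0 < t := by linarith
    apply HasDerivAt.const_smul
    have h1 : HasDerivAt (fun t : ℝ => t⁻¹ • (y - x)) ((-(t^2)⁻¹) • (y - x)) t :=
      (hasDerivAt_inv ht0.ne').smul_const _
    have h2 := (hd (t⁻¹ • (y - x))).comp_hasDerivAt t h1
    have h3 : HasDerivAt (fun t : ℝ => (t^N)⁻¹) (-(N * t^(N-1)) / (t^N)^2) t :=
      (hasDerivAt_pow N t).fun_inv (by positivity)
    have h4 := h3.smul h2
    refine HasDerivAt.congr_deriv h4 ?_
    rw [hχe]
    simp only [Function.comp]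
    generalize y - x = v
    rw [(ψ' (t⁻¹ • v)).map_smul, (ψ' (t⁻¹ • v)).map_smul]
    generalize ψ' (t⁻¹ • v) v = a
    generalize ψ (t⁻¹ • v) = b
    symm
    rw [smul_sub, smul_neg, smul_smul, smul_smul, smul_smul, add_comm, sub_eq_add_neg, ← neg_smul,
      ← neg_smul]
    congr 2
    · rcases N with _ | n
      · simp
      · simp only [Nat.add_sub_cancel, pow_succ]; field_simp
    · field_simp

end kernel

set_option maxSynthPendingDepth 3

section kernel2
variable {N : ℕ} {F : Type*} [NormedAddCommGroup F] [NormedSpace ℝ F] [CompleteSpace F]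

theorem TT_integrable {ψ : Euc N → F} (hψ : Integrable ψ) {g : Euc N → ℝ} (hg : Measurable g)
    {B : ℝ} (hB : ∀ x, |g x| ≤ B) (s : ℝ) (x : Euc N) :
    Integrable (fun z => g (x + s • z) • ψ z) := by
  have hm : Measurable (fun z : Euc N => g (x + s • z)) := hg.comp (by fun_prop)
  exact hψ.bdd_smul B hm.aestronglyMeasurable (ae_of_all _ fun z => by simpa using hB _)

theorem TT_bound {ψ : Euc N → F} (hψ : Integrable ψ) {g : Euc N → ℝ}
    {B : ℝ} (hB : ∀ x, |g x| ≤ B) (s : ℝ) (x : Euc N) :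
    ‖TT N ψ g s x‖ ≤ B * ∫ z, ‖ψ z‖ := by
  rw [TT, ← integral_const_mul]
  refine norm_integral_le_of_norm_le (hψ.norm.const_mul B) (ae_of_all _ fun z => ?_)
  rw [norm_smul]; gcongr; simpa using hB _

theorem TT_holder {ψ : Euc N → F} (hψ : Dec N ψ) (h0 : ∫ z, ψ z = 0) {g : Euc N → ℝ}
    (hg : Measurable g) {B : ℝ} (hB : ∀ x, |g x| ≤ B) {H β : ℝ} (hH : 0 ≤ H) (hβ : 0 < β)
    (hβ1 : β ≤ 1)
    (hh : ∀ x y, |g x - g y| ≤ H * ‖x - y‖ ^ β) {s : ℝ} (hs : 0 < s) (x : Euc N) :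
    ‖TT N ψ g s x‖ ≤ H * s ^ β * ∫ z, (1 + ‖z‖) * ‖ψ z‖ := by
  have e : TT N ψ g s x = ∫ z, (g (x + s • z) - g x) • ψ z := by
    simp only [sub_smul]
    rw [integral_sub (TT_integrable hψ.integrable hg hB s x) (hψ.integrable.fun_smul (g x)),
      integral_smul, h0, smul_zero, sub_zero, TT]
  rw [e, ← integral_const_mul]
  refine norm_integral_le_of_norm_le (hψ.integrable_mul.const_mul _) (ae_of_all _ fun z => ?_)
  rw [norm_smul, ← mul_assoc]
  gcongr
  rw [Real.norm_eq_abs]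
  refine (hh _ _).trans ?_
  rw [add_sub_cancel_left, norm_smul, Real.norm_eq_abs, abs_of_pos hs,
    Real.mul_rpow hs.le (norm_nonneg _), mul_assoc]
  gcongr
  calc ‖z‖ ^ β ≤ (1 + ‖z‖) ^ β := by gcongr; linarith
    _ ≤ (1 + ‖z‖) ^ (1:ℝ) := by
      apply Real.rpow_le_rpow_of_exponent_le _ hβ1
      linarith [norm_nonneg z]
    _ = _ := Real.rpow_one _

theorem TT_meas {ψ : Euc N → F} (hψ : Continuous ψ) {g : Euc N → ℝ}
    (hg : Measurable g) (x : Euc N) : StronglyMeasurable (fun s => TT N ψ g s x) := by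
  apply StronglyMeasurable.integral_prod_right (f := fun s z => g (x + s • z) • ψ z)
  apply StronglyMeasurable.smul
  · have : Measurable (fun p : ℝ × Euc N => g (x + p.1 • p.2)) := hg.comp (by fun_prop)
    exact this.stronglyMeasurable
  · exact (hψ.comp continuous_snd).stronglyMeasurable

theorem TT_cont {ψ : Euc N → F} (hψ : Dec N ψ) {g : Euc N → ℝ}
    (hg : Continuous g) {B : ℝ} (hB : ∀ x, |g x| ≤ B) :
    Continuous (fun p : ℝ × Euc N => TT N ψ g p.1 p.2) := by
  have := hψ.1
  refine continuous_of_dominated (bound := fun z => B * ‖ψ z‖) ?_ ?_ ?_ ?_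
  · intro p; exact Continuous.aestronglyMeasurable (by fun_prop)
  · intro p; refine ae_of_all _ fun z => ?_
    rw [norm_smul]; gcongr; simpa using hB _
  · exact hψ.integrable.norm.const_mul B
  · refine ae_of_all _ fun z => ?_
    fun_prop

/-- time integral of the kernels -/
def UU (N : ℕ) {F : Type*} [NormedAddCommGroup F] [NormedSpace ℝ F]
    (w : ℝ → ℝ) (ψ : Euc N → F) (g : Euc N → ℝ) (x : Euc N) : F :=
  ∫ s in Ioi (0:ℝ), w s • TT N ψ g s x

theorem UU_integrable {ψ : Euc N → F} (hψ : Continuous ψ) {g : Euc N → ℝ} (hg : Measurable g)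
    {w : ℝ → ℝ} (hw : Measurable w) {b : ℝ → ℝ} (hb : IntegrableOn b (Ioi 0))
    {x : Euc N}  (hbd : ∀ s, 0 < s → ‖w s • TT N ψ g s x‖ ≤ b s) :
    IntegrableOn (fun s => w s • TT N ψ g s x) (Ioi 0) := by
  refine Integrable.mono' hb ?_ ?_
  · exact (hw.stronglyMeasurable.smul (TT_meas hψ hg x)).aestronglyMeasurable
  · exact (ae_restrict_iff' measurableSet_Ioi).2 (ae_of_all _ hbd)

theorem UU_hasFDerivAt {ψ : Euc N → F} {ψ' : Euc N → (Euc N →L[ℝ] F)}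
    (hψ : Dec N ψ) (hψ' : Dec N ψ') (hd : ∀ z, HasFDerivAt ψ (ψ' z) z)
    {g : Euc N → ℝ} (hg : Measurable g) {B : ℝ} (hB : ∀ x, |g x| ≤ B)
    {w : ℝ → ℝ} (hw : Measurable w) {b b' : ℝ → ℝ}
    (hb : IntegrableOn b (Ioi 0)) (hb' : IntegrableOn b' (Ioi 0))
    (hbd : ∀ x s, 0 < s → ‖w s • TT N ψ g s x‖ ≤ b s)
    (hbd' : ∀ x s, 0 < s → ‖(-(w s * s⁻¹)) • TT N ψ' g s x‖ ≤ b' s) (x : Euc N) :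
    HasFDerivAt (UU N w ψ g) (UU N (fun s => -(w s * s⁻¹)) ψ' g x) x := by
  unfold UU
  apply hasFDerivAt_integral_of_dominated_of_fderiv_le
    (F' := fun x s => (-(w s * s⁻¹)) • TT N ψ' g s x) (s := univ) (bound := b')
  · exact univ_mem
  · exact Eventually.of_forall fun x' =>
      (hw.stronglyMeasurable.smul (TT_meas hψ.1 hg x')).aestronglyMeasurable
  · exact UU_integrable hψ.1 hg hw hb (hbd x)
  · exact ((hw.mul measurable_inv).neg.stronglyMeasurable.smul
      (TT_meas hψ'.1 hg x)).aestronglyMeasurable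
  · exact (ae_restrict_iff' measurableSet_Ioi).2 (ae_of_all _ fun s hs x _ => hbd' x s hs)
  · exact hb'
  · refine (ae_restrict_iff' measurableSet_Ioi).2 (ae_of_all _ fun s hs x _ => ?_)
    refine ((TT_hasFDerivAt hψ hψ' hd hg hB hs x).const_smul (w s)).congr_fderiv ?_
    rw [smul_smul]; congr 1; ring

theorem UU_continuous {ψ : Euc N → F} (hψ : Dec N ψ)
    {g : Euc N → ℝ} (hg : Continuous g) {B : ℝ} (hB : ∀ x, |g x| ≤ B)
    {w : ℝ → ℝ} (hw : Measurable w) {b : ℝ → ℝ}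
    (hb : IntegrableOn b (Ioi 0))
    (hbd : ∀ x s, 0 < s → ‖w s • TT N ψ g s x‖ ≤ b s) :
    Continuous (UU N w ψ g) := by
  unfold UU
  refine continuous_of_dominated (bound := b) ?_ ?_ hb ?_
  · exact fun x' =>
      (hw.stronglyMeasurable.smul (TT_meas hψ.1 hg.measurable x')).aestronglyMeasurable
  · exact fun x => (ae_restrict_iff' measurableSet_Ioi).2 (ae_of_all _ fun s hs => hbd x s hs)
  · refine ae_of_all _ fun s => ?_
    have := TT_cont hψ hg hB
    have h2 : Continuous (fun x => TT N ψ g s x) := this.comp (by fun_prop : Continuous fun x => (s, x))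
    exact h2.const_smul _

end kernel2

/-! Gaussian -/
section gauss
variable (N : ℕ)

def ip : Euc N →L[ℝ] Euc N →L[ℝ] ℝ :=
  LinearMap.mkContinuous₂ (innerₗ (Euc N)) 1 (fun x y => by
    simpa using abs_real_inner_le_norm x y)

theorem ip_apply (x y : Euc N) : ip N x y = inner ℝ x y := rfl

def gam0 (z : Euc N) : ℝ := Real.exp (-(1/4) * ‖z‖ ^ 2)
def gam (z : Euc N) : ℝ := (∫ y, gam0 N y)⁻¹ * gam0 N z
def gam1 (z : Euc N) : Euc N →L[ℝ] ℝ := (-(1/2) * gam N z) • ip N z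
def gam2 (z : Euc N) : Euc N →L[ℝ] Euc N →L[ℝ] ℝ :=
  (-(1/2) * gam N z) • ip N + ((1/4 * gam N z) • ip N z).smulRight (ip N z)
def chi (z : Euc N) : ℝ := -((N:ℝ) • gam N z) - gam1 N z z

theorem gam0_bound (m : ℕ) (z : Euc N) :
    (1 + ‖z‖) ^ m * gam0 N z ≤ m.factorial * Real.exp 2 := by
  have h1 := Real.pow_div_factorial_le_exp (1 + ‖z‖) (by positivity) m
  have h2 : (0:ℝ) < m.factorial := by positivity
  rw [div_le_iff₀ h2] at h1
  unfold gam0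
  calc (1 + ‖z‖) ^ m * Real.exp (-(1/4) * ‖z‖ ^ 2)
      ≤ (Real.exp (1 + ‖z‖) * m.factorial) * Real.exp (-(1/4) * ‖z‖ ^ 2) := by gcongr
    _ = m.factorial * Real.exp (1 + ‖z‖ + -(1/4) * ‖z‖ ^ 2) := by rw [Real.exp_add (1 + ‖z‖)]; ring
    _ ≤ _ := by
      gcongr
      nlinarith [sq_nonneg (‖z‖ / 2 - 1)]

theorem gam0_pos (z) : 0 < gam0 N z := Real.exp_pos _

theorem gam0_cont : Continuous (gam0 N) := by unfold gam0; fun_prop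

theorem dec_of {F : Type*} [NormedAddCommGroup F] {ψ : Euc N → F} (hc : Continuous ψ) {C : ℝ}
    (hC : 0 ≤ C) (h : ∀ z, ‖ψ z‖ ≤ C * ((1 + ‖z‖) ^ 2 * gam0 N z)) : Dec N ψ := by
  refine ⟨hc, C * ((N+4).factorial * Real.exp 2), by positivity, fun z => ?_⟩
  refine (h z).trans ?_
  rw [mul_assoc]
  refine mul_le_mul_of_nonneg_left ?_ hC
  have h0 : 0 < 1 + ‖z‖ := by positivity
  have := gam0_bound N (N+4) z
  rw [Real.rpow_neg h0.le, ← div_eq_mul_inv, le_div_iff₀ (by positivity)]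
  have e : (1 + ‖z‖) ^ ((N:ℝ) + 2) = (1 + ‖z‖) ^ (N + 2) := by exact_mod_cast Real.rpow_natCast _ (N+2)
  rw [e]
  calc _ = (1 + ‖z‖) ^ (N+4) * gam0 N z := by ring
    _ ≤ _ := this

theorem gam0_dec : Dec N (gam0 N) := by
  apply dec_of N (gam0_cont N) zero_le_one
  intro z
  have := gam0_pos N z
  rw [Real.norm_of_nonneg this.le, one_mul]
  have h1 : 1 ≤ (1 + ‖z‖) ^ 2 := one_le_pow₀ (by linarith [norm_nonneg z])
  nlinarith

theorem gam0_int_pos : 0 < ∫ y, gam0 N y := by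
  apply (gam0_dec N).integrable |> fun h => ?_
  rw [integral_pos_iff_support_of_nonneg (fun z => (gam0_pos N z).le) h]
  have : Function.support (gam0 N) = univ := by
    ext z; simp [(gam0_pos N z).ne']
  rw [this]; exact Measure.measure_univ_pos.2 (NeZero.ne _)

theorem gam_pos (z) : 0 < gam N z := mul_pos (inv_pos.2 (gam0_int_pos N)) (gam0_pos N z)

theorem gam_cont : Continuous (gam N) := (gam0_cont N).const_mul _

theorem gam_int : ∫ z, gam N z = 1 := by
  unfold gam; rw [integral_const_mul, inv_mul_cancel₀ (gam0_int_pos N).ne']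

theorem gam_dec : Dec N (gam N) := by
  have hI := gam0_int_pos N
  apply dec_of N (gam_cont N) (C := (∫ y, gam0 N y)⁻¹) (by positivity)
  intro z
  have := gam_pos N z
  rw [Real.norm_of_nonneg this.le, gam]
  gcongr
  have h1 : 1 ≤ (1 + ‖z‖) ^ 2 := one_le_pow₀ (by linarith [norm_nonneg z])
  nlinarith [gam0_pos N z]

theorem ip_norm (z : Euc N) : ‖ip N z‖ ≤ ‖z‖ := by
  refine ContinuousLinearMap.opNorm_le_bound _ (norm_nonneg _) fun y => ?_
  simpa [ip_apply] using abs_real_inner_le_norm z y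

theorem gam1_dec : Dec N (gam1 N) := by
  have hI := gam0_int_pos N
  have hc := gam_cont N
  apply dec_of N (by unfold gam1; fun_prop) (C := (∫ y, gam0 N y)⁻¹) (by positivity)
  intro z
  have := gam_pos N z
  have h0 := norm_nonneg z
  have h2 := ip_norm N z
  rw [gam1, norm_smul, Real.norm_eq_abs, abs_mul, abs_of_pos this]
  calc |(-(1/2):ℝ)| * gam N z * ‖ip N z‖ ≤ 1 * gam N z * (1 + ‖z‖)^2 := by
        gcongr
        · rw [abs_le]; constructor <;> norm_num
        · nlinarith
    _ = _ := by rw [gam]; ring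

theorem gam2_dec : Dec N (gam2 N) := by
  have hI := gam0_int_pos N
  have hc := gam_cont N
  have hcc : Continuous (gam2 N) := by
    have : gam2 N = fun z => (-(1/2) * gam N z) • ip N +
      ContinuousLinearMap.smulRightL ℝ (Euc N) (Euc N →L[ℝ] ℝ) ((1/4 * gam N z) • ip N z) (ip N z) :=
      rfl
    rw [this]; fun_prop
  apply dec_of N hcc (C := (‖ip N‖ + 1) * (∫ y, gam0 N y)⁻¹) (by positivity)
  intro z
  have := gam_pos N z
  have h0 := norm_nonneg z
  have h2 := ip_norm N z
  have h3 : ‖(-(1/2) * gam N z) • ip N‖ ≤ gam N z * ‖ip N‖ := by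
    rw [norm_smul, Real.norm_eq_abs, abs_mul, abs_of_pos this]
    gcongr
    rw [abs_of_neg (by norm_num)]; linarith
  have h4 : ‖((1/4 * gam N z) • ip N z).smulRight (ip N z)‖ ≤ gam N z * (‖z‖ * ‖z‖) := by
    rw [ContinuousLinearMap.norm_smulRight_apply, norm_smul, Real.norm_of_nonneg (by positivity),
      mul_assoc]
    gcongr
    linarith
  rw [gam2]
  calc _ ≤ gam N z * ‖ip N‖ + gam N z * (‖z‖ * ‖z‖) := (norm_add_le _ _).trans (add_le_add h3 h4)
    _ ≤ gam N z * ((‖ip N‖ + 1) * (1 + ‖z‖)^2) := by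
        rw [← mul_add]; gcongr
        nlinarith [norm_nonneg (ip N), mul_nonneg (norm_nonneg (ip N)) h0,
          mul_nonneg (norm_nonneg (ip N)) (mul_nonneg h0 h0)]
    _ = _ := by rw [gam]; ring

theorem chi_dec : Dec N (chi N) := by
  have hI := gam0_int_pos N
  have hc := gam_cont N
  have hc1 := (gam1_dec N).1
  apply dec_of N (by unfold chi; fun_prop) (C := (N + 1) * (∫ y, gam0 N y)⁻¹) (by positivity)
  intro z
  have := gam_pos N z
  have h0 := norm_nonneg z
  have e : chi N z = (-N + 1/2 * ‖z‖^2) * gam N z := by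
    simp only [chi, gam1, smul_apply, ip_apply, real_inner_self_eq_norm_sq,
      smul_eq_mul]; ring
  rw [e, norm_mul, Real.norm_of_nonneg this.le]
  calc _ ≤ ((N+1) * (1 + ‖z‖)^2) * gam N z := by
        gcongr
        rw [Real.norm_eq_abs, abs_le]
        have : (0:ℝ) ≤ N := by positivity
        constructor <;> nlinarith [mul_nonneg this h0, mul_nonneg this (mul_nonneg h0 h0)]
    _ = _ := by rw [gam]; ring

theorem gam_deriv (z) : HasFDerivAt (gam N) (gam1 N z) z := by
  have h1 : HasFDerivAt (fun z : Euc N => ‖z‖^2) ((2:ℝ) • ip N z) z := by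
    have := (hasStrictFDerivAt_norm_sq z).hasFDerivAt
    refine this.congr_fderiv ?_
    refine ContinuousLinearMap.ext fun v => ?_
    simp [ip_apply]
  have h2 := ((h1.const_mul (-(1/4))).exp).const_mul (∫ y, gam0 N y)⁻¹
  refine h2.congr_fderiv ?_
  simp only [gam1, gam, gam0, smul_smul]
  congr 1; ring

theorem gam1_deriv (z) : HasFDerivAt (gam1 N) (gam2 N z) z := by
  have h1 := (gam_deriv N z).const_mul (-(1/2))
  have h2 := h1.smul (ip N).hasFDerivAt (x := z)
  refine h2.congr_fderiv ?_
  simp only [gam2, gam1, smul_smul]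
  congr 3; ring

theorem gam2_trace (z : Euc N) : 2 * ∑ i : Fin N, gam2 N z (EuclideanSpace.single i 1)
    (EuclideanSpace.single i 1) = chi N z := by
  have h1 : ∑ i : Fin N, z i ^ 2 = ‖z‖^2 := by rw [EuclideanSpace.real_norm_sq_eq]
  simp only [chi, gam1, gam2, add_apply, smul_apply,
    ContinuousLinearMap.smulRight_apply, ip_apply, real_inner_self_eq_norm_sq, smul_eq_mul]
  rw [Finset.sum_add_distrib, ← Finset.mul_sum]
  have h2 : ∀ i : Fin N, 1/4 * gam N z * inner ℝ z (EuclideanSpace.single i (1:ℝ)) *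
    inner ℝ z (EuclideanSpace.single i (1:ℝ)) = 1/4 * gam N z * z i ^ 2 := by
    intro i; simp [EuclideanSpace.inner_single_right]; ring
  rw [Finset.sum_congr rfl (fun i _ => h2 i), ← Finset.mul_sum, h1]
  simp
  ring

end gauss


theorem zero_int {N : ℕ} {F : Type*} [NormedAddCommGroup F] [NormedSpace ℝ F] [CompleteSpace F]
    {ψ : Euc N → F} {ψ' : Euc N → (Euc N →L[ℝ] F)}
    (hψ : Dec N ψ) (hψ' : Dec N ψ') (hd : ∀ z, HasFDerivAt ψ (ψ' z) z) : ∫ z, ψ' z = 0 := by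
  have h := TT_hasFDerivAt hψ hψ' hd (g := fun _ => 1) measurable_const (B := 1) (by simp)
    one_pos 0
  have e : TT N ψ (fun _ => 1) 1 = fun _ => ∫ z, ψ z := by ext x; simp [TT]
  rw [e] at h
  have := h.unique (hasFDerivAt_const _ _)
  simpa [TT] using this

theorem intOn_pow {k : ℝ} (hk : 0 < k) {a : ℝ} (ha : -1 < a) (c : ℝ) :
    IntegrableOn (fun s : ℝ => c * (s ^ a * Real.exp (-k * s ^ 2))) (Ioi 0) :=
  (integrableOn_rpow_mul_exp_neg_mul_sq hk ha).const_mul c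

section res
variable {N : ℕ} {k : ℝ}

def w0 (k s : ℝ) : ℝ := 2 * s * Real.exp (-k * s ^ 2)

theorem w0_meas : Measurable (w0 k) := by unfold w0; fun_prop

def RR (N : ℕ) (k : ℝ) (g : Euc N → ℝ) (x : Euc N) : ℝ := UU N (w0 k) (gam N) g x

theorem w0_int (hk : 0 < k) : IntegrableOn (w0 k) (Ioi 0) := by
  refine (intOn_pow hk (a := 1) (by norm_num) 2).congr_fun (fun s hs => ?_) measurableSet_Ioi
  simp [w0]; ring

theorem w0_integral (hk : 0 < k) : ∫ s in Ioi 0, w0 k s = 1 / k := by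
  have hd : ∀ s ∈ Ici (0:ℝ), HasDerivAt (fun s => -(1/k) * Real.exp (-k * s ^ 2)) (w0 k s) s := by
    intro s _
    have := (((hasDerivAt_pow 2 s).const_mul (-k)).exp).const_mul (-(1/k))
    refine this.congr_deriv ?_
    simp only [w0]; field_simp; norm_num; ring
  have ht : Tendsto (fun s : ℝ => -(1/k) * Real.exp (-k * s ^ 2)) atTop (𝓝 (-(1/k) * 0)) := by
    apply Tendsto.const_mul
    apply Real.tendsto_exp_atBot.comp
    exact (tendsto_pow_atTop two_ne_zero).const_mul_atTop_of_neg (by linarith)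
  rw [integral_Ioi_of_hasDerivAt_of_tendsto' hd (w0_int hk) ht]
  simp

theorem gam_norm_int : ∫ z, ‖gam N z‖ = 1 := by
  rw [← gam_int N]; congr 1; ext z; exact Real.norm_of_nonneg (gam_pos N z).le

theorem b0 {g : Euc N → ℝ} {B : ℝ} (hB : ∀ x, |g x| ≤ B) :
    ∀ x s, 0 < s → ‖w0 k s • TT N (gam N) g s x‖ ≤ B * w0 k s := by
  intro x s hs
  have hw : 0 < w0 k s := by unfold w0; positivity
  have := TT_bound (gam_dec N).integrable hB s x
  rw [gam_norm_int, mul_one] at this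
  rw [norm_smul, Real.norm_of_nonneg hw.le, mul_comm]
  gcongr

theorem RR_integrable (hk : 0 < k) {g : Euc N → ℝ} (hg : Measurable g) {B : ℝ}
    (hB : ∀ x, |g x| ≤ B) (x : Euc N) :
    IntegrableOn (fun s => w0 k s • TT N (gam N) g s x) (Ioi 0) :=
  UU_integrable (gam_dec N).1 hg w0_meas ((w0_int hk).const_mul B) (b0 hB x)

theorem RR_mono (hk : 0 < k) {g h : Euc N → ℝ} (hg : Measurable g) (hh : Measurable h) {B : ℝ}
    (hB : ∀ x, |g x| ≤ B) (hB' : ∀ x, |h x| ≤ B) (hle : ∀ x, g x ≤ h x) (x : Euc N) :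
    RR N k g x ≤ RR N k h x := by
  refine setIntegral_mono_on (RR_integrable hk hg hB x) (RR_integrable hk hh hB' x)
    measurableSet_Ioi fun s hs => ?_
  have hs : 0 < s := hs
  have hw : 0 < w0 k s := by unfold w0; positivity
  rw [smul_eq_mul, smul_eq_mul]
  refine mul_le_mul_of_nonneg_left ?_ hw.le
  refine integral_mono (TT_integrable (gam_dec N).integrable hg hB s x)
    (TT_integrable (gam_dec N).integrable hh hB' s x) fun z => ?_
  simp only [smul_eq_mul]
  exact mul_le_mul_of_nonneg_right (hle _) (gam_pos N z).le

theorem RR_const (hk : 0 < k) (c : ℝ) (x : Euc N) : RR N k (fun _ => c) x = c / k := by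
  have : ∀ s, TT N (gam N) (fun _ => c) s x = c := by
    intro s; simp only [TT, smul_eq_mul]; rw [integral_const_mul, gam_int, mul_one]
  simp only [RR, UU, this, smul_eq_mul]
  rw [integral_mul_const, w0_integral hk]; ring

theorem RR_tendsto (hk : 0 < k) {g : ℕ → Euc N → ℝ} {h : Euc N → ℝ} (hg : ∀ n, Measurable (g n))
    {B : ℝ} (hB : ∀ n x, |g n x| ≤ B) (ht : ∀ x, Tendsto (fun n => g n x) atTop (𝓝 (h x)))
    (x : Euc N) : Tendsto (fun n => RR N k (g n) x) atTop (𝓝 (RR N k h x)) := by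
  refine tendsto_integral_of_dominated_convergence (fun s => B * w0 k s) ?_ ?_ ?_ ?_
  · intro n
    exact (RR_integrable hk (hg n) (hB n) x).1
  · exact (w0_int hk).const_mul B
  · exact fun n => (ae_restrict_iff' measurableSet_Ioi).2 (ae_of_all _ fun s hs => b0 (hB n) x s hs)
  · refine ae_of_all _ fun s => ?_
    apply Tendsto.const_smul
    refine tendsto_integral_of_dominated_convergence (fun z => B * ‖gam N z‖) ?_ ?_ ?_ ?_
    · intro n
      exact (TT_integrable (gam_dec N).integrable (hg n) (hB n) s x).1
    · exact (gam_dec N).integrable.norm.const_mul B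
    · refine fun n => ae_of_all _ fun z => ?_
      rw [norm_smul]; gcongr; simpa using hB n _
    · exact ae_of_all _ fun z => (ht _).smul_const _

theorem RR_pos (hk : 0 < k) {g : Euc N → ℝ} (hg : Continuous g) {B : ℝ}
    (hB : ∀ x, |g x| ≤ B) (h0 : ∀ x, 0 ≤ g x) {y : Euc N} (hy : 0 < g y) (x : Euc N) :
    0 < RR N k g x := by
  have hT : ∀ s, 0 < s → 0 < TT N (gam N) g s x := by
    intro s hs
    have hc := (gam_dec N).1
    refine integral_pos_of_integrable_nonneg_nonzero (x := s⁻¹ • (y - x)) (by fun_prop)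
      (TT_integrable (gam_dec N).integrable hg.measurable hB s x)
      (fun z => mul_nonneg (h0 _) (gam_pos N z).le) ?_
    rw [smul_smul, mul_inv_cancel₀ hs.ne', one_smul, add_sub_cancel, smul_eq_mul]
    exact (mul_pos hy (gam_pos N _)).ne'
  have hp : ∀ s, 0 < s → 0 < w0 k s • TT N (gam N) g s x := by
    intro s hs
    have hw : 0 < w0 k s := by unfold w0; positivity
    exact mul_pos hw (hT s hs)
  rw [RR, UU, setIntegral_pos_iff_support_of_nonneg_ae]
  · have : Function.support (fun s => w0 k s • TT N (gam N) g s x) ∩ Ioi 0 = Ioi 0 := by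
      apply inter_eq_right.2
      intro s hs
      exact (hp s hs).ne'
    rw [this]; simp
  · exact (ae_restrict_iff' measurableSet_Ioi).2 (ae_of_all _ fun s hs => (hp s hs).le)
  · exact RR_integrable hk hg.measurable hB x

def w1 (k s : ℝ) : ℝ := -(w0 k s * s⁻¹)
def w2 (k s : ℝ) : ℝ := -(w1 k s * s⁻¹)
theorem w1_meas : Measurable (w1 k) := by
  unfold w1; exact (w0_meas.mul measurable_inv).neg
theorem w2_meas : Measurable (w2 k) := by
  unfold w2; exact (w1_meas.mul measurable_inv).neg
theorem w1_eq {s : ℝ} (hs : 0 < s) : w1 k s = -2 * Real.exp (-k * s^2) := by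
  simp only [w1, w0]; field_simp
theorem w2_eq {s : ℝ} (hs : 0 < s) : w2 k s = 2 * s⁻¹ * Real.exp (-k * s^2) := by
  rw [w2, w1_eq hs]; ring

theorem b1 {g : Euc N → ℝ} {B : ℝ} (hB : ∀ x, |g x| ≤ B) :
    ∀ x s, 0 < s → ‖w1 k s • TT N (gam1 N) g s x‖
      ≤ (2 * (B * ∫ z, ‖gam1 N z‖)) * (s ^ (0:ℝ) * Real.exp (-k * s ^ 2)) := by
  intro x s hs
  rw [norm_smul, w1_eq hs, norm_mul, Real.norm_of_nonneg (Real.exp_pos _).le, Real.rpow_zero]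
  have := TT_bound (gam1_dec N).integrable hB s x
  calc _ ≤ ‖(-2:ℝ)‖ * Real.exp (-k * s ^ 2) * (B * ∫ z, ‖gam1 N z‖) := by gcongr
    _ = _ := by norm_num; ring

theorem RR_deriv (hk : 0 < k) {g : Euc N → ℝ} (hg : Measurable g) {B : ℝ}
    (hB : ∀ x, |g x| ≤ B) (x : Euc N) :
    HasFDerivAt (RR N k g) (UU N (w1 k) (gam1 N) g x) x :=
  UU_hasFDerivAt (gam_dec N) (gam1_dec N) (gam_deriv N) hg hB w0_meas
    ((w0_int hk).const_mul B) (intOn_pow hk (by norm_num) _) (b0 hB) (b1 hB) x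

theorem RR_lip (hk : 0 < k) {g : Euc N → ℝ} (hg : Measurable g) {B : ℝ}
    (hB : ∀ x, |g x| ≤ B) : ∃ L : ℝ≥0, LipschitzWith L (RR N k g) := by
  refine ⟨Real.toNNReal (∫ s in Ioi (0:ℝ), (2 * (B * ∫ z, ‖gam1 N z‖)) *
    (s ^ (0:ℝ) * Real.exp (-k * s ^ 2))), ?_⟩
  refine lipschitzWith_of_nnnorm_fderiv_le (𝕜 := ℝ)
    (fun x => (RR_deriv hk hg hB x).differentiableAt) fun x => ?_
  rw [(RR_deriv hk hg hB x).fderiv, ← NNReal.coe_le_coe, coe_nnnorm]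
  refine le_trans ?_ (Real.le_coe_toNNReal _)
  exact norm_integral_le_of_norm_le (intOn_pow hk (by norm_num) _)
    ((ae_restrict_iff' measurableSet_Ioi).2 (ae_of_all _ fun s hs => b1 hB x s hs))

theorem b2 {F : Type*} [NormedAddCommGroup F] [NormedSpace ℝ F] [CompleteSpace F] {ψ : Euc N → F}
    (hψ : Dec N ψ) (h0 : ∫ z, ψ z = 0)
    {g : Euc N → ℝ} (hg : Measurable g) {B : ℝ} (hB : ∀ x, |g x| ≤ B) {H β : ℝ}
    (hH : 0 ≤ H) (hβ : 0 < β) (hβ1 : β ≤ 1) (hh : ∀ x y, |g x - g y| ≤ H * ‖x - y‖ ^ β) :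
    ∀ x s, 0 < s → ‖w2 k s • TT N ψ g s x‖
      ≤ (2 * (H * ∫ z, (1 + ‖z‖) * ‖ψ z‖)) * (s ^ (β - 1) * Real.exp (-k * s ^ 2)) := by
  intro x s hs
  rw [norm_smul, w2_eq hs, Real.norm_of_nonneg (by positivity)]
  have := TT_holder hψ h0 hg hB hH hβ hβ1 hh hs x
  calc _ ≤ (2 * s⁻¹ * Real.exp (-k * s ^ 2)) * (H * s ^ β * ∫ z, (1 + ‖z‖) * ‖ψ z‖) := by gcongr
    _ = _ := by rw [Real.rpow_sub hs, Real.rpow_one]; ring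

theorem RR_reg (hk : 0 < k) {g : Euc N → ℝ} {B : ℝ} (hg : Continuous g)
    (hB : ∀ x, |g x| ≤ B) {H β : ℝ}
    (hH : 0 ≤ H) (hβ : 0 < β) (hβ1 : β ≤ 1) (hh : ∀ x y, |g x - g y| ≤ H * ‖x - y‖ ^ β) :
    ContDiff ℝ 2 (RR N k g) ∧ ∀ x, lap N (RR N k g) x = k * RR N k g x - g x := by
  have hgm := hg.measurable
  have z2 : ∫ z, gam2 N z = 0 := zero_int (gam1_dec N) (gam2_dec N) (gam1_deriv N)
  have B2 := b2 (k := k) (gam2_dec N) z2 hgm hB hH hβ hβ1 hh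
  have I2 := intOn_pow hk (by linarith : -1 < β - 1) (2 * (H * ∫ z, (1 + ‖z‖) * ‖gam2 N z‖))
  have D1 := RR_deriv hk hgm hB
  have D2 : ∀ x, HasFDerivAt (UU N (w1 k) (gam1 N) g) (UU N (w2 k) (gam2 N) g x) x :=
    UU_hasFDerivAt (gam1_dec N) (gam2_dec N) (gam1_deriv N) hgm hB w1_meas
      (intOn_pow hk (by norm_num) _) I2 (b1 hB) B2
  have C2 : Continuous (UU N (w2 k) (gam2 N) g) := UU_continuous (gam2_dec N) hg hB w2_meas I2 B2
  have f1 : fderiv ℝ (RR N k g) = UU N (w1 k) (gam1 N) g := by ext1 x; exact (D1 x).fderiv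
  have f2 : fderiv ℝ (UU N (w1 k) (gam1 N) g) = UU N (w2 k) (gam2 N) g := by
    ext1 x; exact (D2 x).fderiv
  constructor
  · have : (2 : WithTop ℕ∞) = 1 + 1 := by norm_num
    rw [this, contDiff_succ_iff_fderiv]
    refine ⟨fun x => (D1 x).differentiableAt, by simp, ?_⟩
    rw [f1, contDiff_one_iff_fderiv, f2]
    exact ⟨fun x => (D2 x).differentiableAt, C2⟩
  intro x
  have INT2 : IntegrableOn (fun s => w2 k s • TT N (gam2 N) g s x) (Ioi 0) :=
    UU_integrable (gam2_dec N).1 hgm w2_meas I2 (B2 x)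
  have hev : ∀ (e : Euc N), ∀ s, (TT N (gam2 N) g s x) e e = TT N (fun z => gam2 N z e e) g s x := by
    intro e s
    have hi := TT_integrable (gam2_dec N).integrable hgm hB s x
    rw [TT, ContinuousLinearMap.integral_apply hi, ContinuousLinearMap.integral_apply]
    · simp [TT]
    · exact hi.apply_continuousLinearMap e
  have l1 : lap N (RR N k g) x = ∫ s in Ioi (0:ℝ), Real.exp (-k * s^2) * (s⁻¹ • TT N (chi N) g s x) := by
    unfold lap
    have : ∀ i : Fin N, fderiv ℝ (fun y => fderiv ℝ (RR N k g) y (EuclideanSpace.single i 1)) x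
        (EuclideanSpace.single i 1) = ∫ s in Ioi (0:ℝ), w2 k s *
          TT N (fun z => gam2 N z (EuclideanSpace.single i 1) (EuclideanSpace.single i 1)) g s x := by
      intro i
      generalize EuclideanSpace.single i (1:ℝ) = e
      rw [f1]
      have := ((D2 x).clm_apply (hasFDerivAt_const e x)).fderiv
      rw [this]
      simp only [ContinuousLinearMap.comp_zero, zero_add, ContinuousLinearMap.flip_apply]
      rw [UU, ContinuousLinearMap.integral_apply INT2, ContinuousLinearMap.integral_apply]
      · simp [hev]
      · exact INT2.apply_continuousLinearMap e
    rw [Finset.sum_congr rfl fun i _ => this i, ← integral_finsetSum]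
    · refine setIntegral_congr_fun measurableSet_Ioi fun s hs => ?_
      rw [← Finset.mul_sum, w2_eq hs]
      have : TT N (chi N) g s x = 2 * ∑ i : Fin N, TT N (fun z => gam2 N z (EuclideanSpace.single i 1) (EuclideanSpace.single i 1)) g s x := by
        simp only [TT]
        rw [← integral_finsetSum, ← integral_const_mul]
        · congr 1; ext z
          simp only [smul_eq_mul]
          rw [← gam2_trace, ← Finset.mul_sum]; ring
        · intro i _
          have hi := TT_integrable (gam2_dec N).integrable hgm hB s x
          have := (hi.apply_continuousLinearMap (EuclideanSpace.single i 1)).apply_continuousLinearMap (EuclideanSpace.single i 1)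
          simpa using this
      rw [this, smul_eq_mul]; ring
    · intro i _
      have := (INT2.apply_continuousLinearMap (EuclideanSpace.single i 1)).apply_continuousLinearMap (EuclideanSpace.single i 1)
      simpa [hev] using this
  -- FTC
  have zc : ∫ z, chi N z = 0 := by
    have h1 : ∀ z, chi N z = 2 * ∑ i : Fin N, gam2 N z (EuclideanSpace.single i 1)
      (EuclideanSpace.single i 1) := fun z => (gam2_trace N z).symm
    simp only [h1]
    rw [integral_const_mul, integral_finsetSum]
    · have : ∀ i : Fin N, ∫ z, gam2 N z (EuclideanSpace.single i 1) (EuclideanSpace.single i 1) = 0 := by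
        intro i
        have hi := (gam2_dec N).integrable
        rw [← ContinuousLinearMap.integral_apply (hi.apply_continuousLinearMap _),
          ← ContinuousLinearMap.integral_apply hi, z2]
        simp
      simp [this]
    · intro i _
      exact ((gam2_dec N).integrable.apply_continuousLinearMap _).apply_continuousLinearMap _
  have hint1 : IntegrableOn (fun s => Real.exp (-k * s^2) * (s⁻¹ • TT N (chi N) g s x)) (Ioi 0) := by
    have h := UU_integrable (chi_dec N).1 hgm w2_meas (intOn_pow hk (by linarith : -1 < β - 1) _)
      (b2 (k := k) (chi_dec N) zc hgm hB hH hβ hβ1 hh x)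
    have h' : IntegrableOn (fun s => 1 / 2 * w2 k s • TT N (chi N) g s x) (Ioi 0) :=
      h.const_mul (1/2)
    refine h'.congr_fun (fun s hs => ?_) measurableSet_Ioi
    simp only [w2_eq hs, smul_eq_mul]; ring
  have hint0 := RR_integrable hk hgm hB x
  have hcont : Continuous (fun s => TT N (gam N) g s x) :=
    (TT_cont (gam_dec N) hg hB).comp (by fun_prop : Continuous fun s : ℝ => (s, x))
  have hd : ∀ s ∈ Ioi (0:ℝ), HasDerivAt (fun s => Real.exp (-k * s^2) * TT N (gam N) g s x)
      (Real.exp (-k * s^2) * (s⁻¹ • TT N (chi N) g s x) - k * (w0 k s • TT N (gam N) g s x)) s := by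
    intro s hs
    have h1 := ((hasDerivAt_pow 2 s).const_mul (-k)).exp
    have h2 := TT_hasDerivAt (gam_dec N) (chi_dec N) (fun _ => rfl) (gam_deriv N) hgm hB hs x
    refine (h1.mul h2).congr_deriv ?_
    simp only [w0, smul_eq_mul]; norm_num; ring
  have ht : Tendsto (fun s => Real.exp (-k * s^2) * TT N (gam N) g s x) atTop (𝓝 0) := by
    have h1 : Tendsto (fun s : ℝ => Real.exp (-k * s^2)) atTop (𝓝 0) := by
      apply Real.tendsto_exp_atBot.comp
      exact (tendsto_pow_atTop two_ne_zero).const_mul_atTop_of_neg (by linarith)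
    refine h1.zero_mul_isBoundedUnder_le ?_
    refine isBoundedUnder_of ⟨B * ∫ z, ‖gam N z‖, fun s => ?_⟩
    exact TT_bound (gam_dec N).integrable hB s x
  have ftc := integral_Ioi_of_hasDerivAt_of_tendsto (a := 0) (m := 0)
    (f := fun s => Real.exp (-k * s^2) * TT N (gam N) g s x)
    (Continuous.continuousWithinAt (by fun_prop)) hd (hint1.sub (hint0.const_mul k)) ht
  rw [integral_sub hint1 (hint0.const_mul k), integral_const_mul, ← l1] at ftc
  have e0 : TT N (gam N) g 0 x = g x := by
    simp only [TT, zero_smul, add_zero, smul_eq_mul]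
    rw [integral_const_mul, gam_int, mul_one]
  have e1 : RR N k g x = ∫ s in Ioi (0:ℝ), w0 k s • TT N (gam N) g s x := rfl
  rw [← e1] at ftc
  simp [e0] at ftc
  linarith

end res


section mp
variable {N : ℕ}

theorem diff_fd {u : Euc N → ℝ} (hu : ContDiff ℝ 2 u) (e : Euc N) :
    ContDiff ℝ 1 (fun y => fderiv ℝ u y e) :=
  (hu.fderiv_right (m := 1) (by norm_num)).clm_apply contDiff_const

theorem lap_sub {u v : Euc N → ℝ} (hu : ContDiff ℝ 2 u) (hv : ContDiff ℝ 2 v) (x : Euc N) :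
    lap N (fun y => u y - v y) x = lap N u x - lap N v x := by
  unfold lap
  rw [← Finset.sum_sub_distrib]
  refine Finset.sum_congr rfl fun i _ => ?_
  generalize EuclideanSpace.single i (1:ℝ) = e
  have h1 : (fun y => fderiv ℝ (fun y => u y - v y) y e) = fun y => fderiv ℝ u y e - fderiv ℝ v y e := by
    ext y
    rw [fderiv_fun_sub (hu.differentiable (by norm_num) y) (hv.differentiable (by norm_num) y)]
    rfl
  rw [h1, fderiv_fun_sub ((diff_fd hu e).differentiable (by norm_num) x)
    ((diff_fd hv e).differentiable (by norm_num) x)]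
  rfl

theorem line_deriv {u : Euc N → ℝ} (hu : Differentiable ℝ u) (x e : Euc N) (t : ℝ) :
    HasDerivAt (fun t : ℝ => u (x + t • e)) (fderiv ℝ u (x + t • e) e) t := by
  have h1 : HasDerivAt (fun t : ℝ => x + t • e) e t := by
    simpa using ((hasDerivAt_id t).smul_const e).const_add x
  exact (hu (x + t • e)).hasFDerivAt.comp_hasDerivAt t h1

theorem lap_max {u : Euc N → ℝ} (hu : ContDiff ℝ 2 u) {x : Euc N} (hx : ∀ y, u y ≤ u x) :
    lap N u x ≤ 0 := by
  unfold lap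
  refine Finset.sum_nonpos fun i _ => ?_
  generalize EuclideanSpace.single i (1:ℝ) = e
  by_contra! hpos
  have hd1 := line_deriv (hu.differentiable (by norm_num)) x e
  have hd2 := line_deriv ((diff_fd hu e).differentiable (by norm_num)) x e
  have e1 : deriv (fun t : ℝ => u (x + t • e)) = fun t : ℝ => fderiv ℝ u (x + t • e) e := by
    ext t; exact (hd1 t).deriv
  have e2 : deriv (deriv (fun t : ℝ => u (x + t • e))) 0 = fderiv ℝ (fun y => fderiv ℝ u y e) x e := by
    rw [e1, (hd2 0).deriv]; simp
  have hmax : IsLocalMax (fun t : ℝ => u (x + t • e)) 0 :=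
    Eventually.of_forall fun t => by simpa using hx _
  have hmin : IsLocalMin (fun t : ℝ => u (x + t • e)) 0 :=
    isLocalMin_of_deriv_deriv_pos (by rw [e2]; exact hpos) hmax.deriv_eq_zero
      (hd1 0).continuousAt
  have heq : (fun t : ℝ => u (x + t • e)) =ᶠ[𝓝 0] fun _ => u (x + (0:ℝ) • e) := by
    filter_upwards [hmax, hmin] with t h1 h2
    exact le_antisymm h1 h2
  have := heq.deriv.deriv_eq
  rw [e2] at this
  simp at this
  linarith

theorem sq_deriv (y : Euc N) : HasFDerivAt (fun y : Euc N => 1 + ‖y‖^2) ((2:ℝ) • ip N y) y := by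
  have := ((hasStrictFDerivAt_norm_sq y).hasFDerivAt).const_add 1
  refine this.congr_fderiv ?_
  refine ContinuousLinearMap.ext fun v => ?_
  simp [ip_apply]

theorem rad_fderiv {φ φ1 : ℝ → ℝ} (h1 : ∀ t, 1 ≤ t → HasDerivAt φ (φ1 t) t) (y : Euc N) :
    HasFDerivAt (fun y : Euc N => φ (1 + ‖y‖^2)) ((2 * φ1 (1 + ‖y‖^2)) • ip N y) y := by
  have := (h1 (1 + ‖y‖^2) (by nlinarith [norm_nonneg y])).comp_hasFDerivAt y (sq_deriv y)
  refine this.congr_fderiv ?_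
  rw [smul_smul]; congr 1; ring

theorem lap_radial {φ φ1 φ2 : ℝ → ℝ} (h1 : ∀ t, 1 ≤ t → HasDerivAt φ (φ1 t) t)
    (h2 : ∀ t, 1 ≤ t → HasDerivAt φ1 (φ2 t) t) (x : Euc N) :
    lap N (fun y => φ (1 + ‖y‖^2)) x = 4 * φ2 (1 + ‖x‖^2) * ‖x‖^2 + 2 * N * φ1 (1 + ‖x‖^2) := by
  unfold lap
  have : ∀ i : Fin N, fderiv ℝ (fun y => fderiv ℝ (fun y => φ (1 + ‖y‖^2)) y
      (EuclideanSpace.single i 1)) x (EuclideanSpace.single i 1)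
      = 4 * φ2 (1 + ‖x‖^2) * x i ^ 2 + 2 * φ1 (1 + ‖x‖^2) := by
    intro i
    have e : (fun y => fderiv ℝ (fun y => φ (1 + ‖y‖^2)) y (EuclideanSpace.single i 1)) =
        fun y : Euc N => (2 * φ1 (1 + ‖y‖^2)) * (ip N).flip (EuclideanSpace.single i 1) y := by
      ext y; rw [(rad_fderiv h1 y).fderiv]; rfl
    rw [e, (((rad_fderiv h2 x).const_mul 2).fun_mul
      ((ip N).flip (EuclideanSpace.single i 1)).hasFDerivAt).fderiv]
    simp [ip_apply, EuclideanSpace.inner_single_right]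
    ring
  rw [Finset.sum_congr rfl fun i _ => this i, Finset.sum_add_distrib, ← Finset.mul_sum,
    ← EuclideanSpace.real_norm_sq_eq]
  simp
  ring

theorem max_principle {k : ℝ} (hk : 0 < k) {z : Euc N → ℝ} (hz : ContDiff ℝ 2 z) {B : ℝ}
    (hB : ∀ x, z x ≤ B) (h : ∀ x, k * z x ≤ lap N z x) (x : Euc N) : z x ≤ 0 := by
  have key : ∀ ε : ℝ, 0 < ε → z x ≤ ε * (1 + ‖x‖^2 + 2 * N / k) := by
    intro ε hε
    have hq : ContDiff ℝ 2 (fun y : Euc N => ε * (1 + ‖y‖^2)) :=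
      contDiff_const.mul (contDiff_const.add (contDiff_norm_sq ℝ))
    have hc : ContDiff ℝ 2 (fun y => z y - ε * (1 + ‖y‖^2)) := hz.sub hq
    have ht : Tendsto (fun y => z y - ε * (1 + ‖y‖^2)) (cocompact (Euc N)) atBot := by
      have h1 : Tendsto (fun y : Euc N => B - ε * (1 + ‖y‖^2)) (cocompact (Euc N)) atBot := by
        have h2 : Tendsto (fun y : Euc N => ε * (1 + ‖y‖^2)) (cocompact (Euc N)) atTop := by
          apply Tendsto.const_mul_atTop hε
          apply tendsto_atTop_add_const_left
          exact (tendsto_pow_atTop two_ne_zero).comp (tendsto_norm_cocompact_atTop)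
        simpa [sub_eq_add_neg] using tendsto_atBot_add_const_left _ B (tendsto_neg_atTop_atBot.comp h2)
      exact tendsto_atBot_mono (fun y => by linarith [hB y]) h1
    obtain ⟨m, hm⟩ := hc.continuous.exists_forall_ge ht
    have hl := lap_max hc hm
    rw [lap_sub hz hq] at hl
    have hl2 := lap_radial (N := N) (φ := fun t => ε * t) (φ1 := fun _ => ε) (φ2 := fun _ => 0)
      (fun t _ => by simpa using (hasDerivAt_id t).const_mul ε) (fun t _ => hasDerivAt_const _ _) m
    rw [hl2] at hl
    have h3 := h m
    have h4 := hm x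
    have h5 : z m ≤ ε * (2 * N / k) := by
      rw [mul_div_assoc', le_div_iff₀ hk]; linarith
    have h6 : 0 ≤ ε * (1 + ‖m‖^2) := by positivity
    linarith
  by_contra! hpos
  have hD : 0 < 1 + ‖x‖^2 + 2 * N / k := by positivity
  have := key (z x / 2 / (1 + ‖x‖^2 + 2 * N / k)) (by positivity)
  rw [div_mul_cancel₀ _ hD.ne'] at this
  linarith

theorem int_fd_zero {h : Euc N → ℝ} (hh : ContDiff ℝ 1 h) (hc : HasCompactSupport h) (e : Euc N) :
    ∫ x, fderiv ℝ h x e = 0 := by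
  have hcont : Continuous (fun x => fderiv ℝ h x e) :=
    (hh.continuous_fderiv (by norm_num)).clm_apply continuous_const
  have hcs : HasCompactSupport (fun x => fderiv ℝ h x e) :=
    (hc.fderiv (𝕜 := ℝ)).comp_left (g := fun L : Euc N →L[ℝ] ℝ => L e) rfl
  have := integral_mul_fderiv_eq_neg_fderiv_mul_of_integrable (μ := (volume : Measure (Euc N)))
    (𝕜 := ℝ) (f := fun _ => (1:ℝ)) (g := h) (v := e) (by simp)
    (by simpa using hcont.integrable_of_hasCompactSupport hcs)
    (by simpa using hh.continuous.integrable_of_hasCompactSupport hc)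
    (fun x _ => differentiableAt_const _) (fun x _ => hh.differentiable (by norm_num) x)
  simpa using this

theorem grad_sq {φ : Euc N → ℝ} (x : Euc N) :
    ‖gradient φ x‖^2 = ∑ i : Fin N, (fderiv ℝ φ x (EuclideanSpace.single i 1))^2 := by
  rw [EuclideanSpace.real_norm_sq_eq]
  refine Finset.sum_congr rfl fun i _ => ?_
  congr 1
  have : inner ℝ (gradient φ x) (EuclideanSpace.single i (1:ℝ)) = fderiv ℝ φ x (EuclideanSpace.single i 1) := by
    unfold gradient
    exact InnerProductSpace.toDual_symm_apply
  rw [← this, EuclideanSpace.inner_single_right]; simp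

theorem picone {φ w q : Euc N → ℝ} (hφ : ContDiff ℝ 2 φ) (hφc : HasCompactSupport φ)
    (hw : ContDiff ℝ 2 w) (hpos : ∀ x, 0 < w x) (hq : Continuous q)
    (h : ∀ x, q x * w x ≤ - lap N w x) :
    ∫ x, q x * φ x ^ 2 ≤ ∫ x, ‖gradient φ x‖^2 := by
  have hφ1 : ContDiff ℝ 1 φ := hφ.of_le (by norm_num)
  have hw1 : ContDiff ℝ 1 w := hw.of_le (by norm_num)
  set h_ : Fin N → Euc N → ℝ := fun i x => φ x ^ 2 * (fderiv ℝ w x (EuclideanSpace.single i 1) / w x) with hh_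
  have hC : ∀ i, ContDiff ℝ 1 (h_ i) := fun i =>
    (hφ1.pow 2).mul ((diff_fd hw _).div hw1 fun x => (hpos x).ne')
  have hS : ∀ i, HasCompactSupport (h_ i) := by
    intro i
    refine HasCompactSupport.mul_right ?_
    exact hφc.comp_left (g := fun t : ℝ => t ^ 2) (by norm_num)
  have hcd : ∀ i, Continuous (fun x => fderiv ℝ (h_ i) x (EuclideanSpace.single i 1)) := fun i =>
    ((hC i).continuous_fderiv (by norm_num)).clm_apply continuous_const
  have hid : ∀ i, Integrable (fun x => fderiv ℝ (h_ i) x (EuclideanSpace.single i 1)) := fun i =>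
    (hcd i).integrable_of_hasCompactSupport
      (((hS i).fderiv (𝕜 := ℝ)).comp_left (g := fun L : Euc N →L[ℝ] ℝ => L (EuclideanSpace.single i 1)) rfl)
  have hgi : Integrable (fun x => ‖gradient φ x‖^2) := by
    simp only [grad_sq]
    refine integrable_finsetSum _ fun i _ => ?_
    refine Continuous.integrable_of_hasCompactSupport ?_ ?_
    · exact (((hφ1).continuous_fderiv (by norm_num)).clm_apply continuous_const).pow 2
    · exact (hφc.fderiv (𝕜 := ℝ)).comp_left
        (g := fun L : Euc N →L[ℝ] ℝ => (L (EuclideanSpace.single i 1))^2) (by simp)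
  have e : ∫ x, (‖gradient φ x‖^2 - ∑ i, fderiv ℝ (h_ i) x (EuclideanSpace.single i 1))
      = ∫ x, ‖gradient φ x‖^2 := by
    rw [integral_sub hgi (integrable_finsetSum _ fun i _ => hid i),
      integral_finsetSum _ fun i _ => hid i]
    simp [int_fd_zero (hC _) (hS _)]
  rw [← e]
  refine integral_mono ?_ (hgi.sub (integrable_finsetSum _ fun i _ => hid i)) fun x => ?_
  · refine Continuous.integrable_of_hasCompactSupport (hq.mul (hφ.continuous.pow 2)) ?_
    exact HasCompactSupport.mul_left (hφc.comp_left (g := fun t : ℝ => t ^ 2) (by norm_num))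
  · simp only
    have hwx := hpos x
    have hD : ∀ i, fderiv ℝ (h_ i) x (EuclideanSpace.single i 1) ≤
        (fderiv ℝ φ x (EuclideanSpace.single i 1))^2 + φ x ^ 2 / w x *
        fderiv ℝ (fun y => fderiv ℝ w y (EuclideanSpace.single i 1)) x (EuclideanSpace.single i 1) := by
      intro i
      have d1 := (hφ1.differentiable (by norm_num) x).hasFDerivAt
      have d2 := (hw1.differentiable (by norm_num) x).hasFDerivAt
      have d3 := ((diff_fd hw (EuclideanSpace.single i 1)).differentiable (by norm_num) x).hasFDerivAt
      have d5 := (hasDerivAt_inv hwx.ne').comp_hasFDerivAt x d2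
      have d4 := (d1.pow 2).mul (d3.mul d5)
      have e5 : h_ i = (fun y => φ y ^ 2) * ((fun y => fderiv ℝ w y (EuclideanSpace.single i 1)) * ((fun y => y⁻¹) ∘ w)) := by
        ext y; simp [hh_, div_eq_mul_inv]
      rw [e5, d4.fderiv]
      simp
      generalize fderiv ℝ φ x (EuclideanSpace.single i 1) = P
      generalize fderiv ℝ (fun y => fderiv ℝ w y (EuclideanSpace.single i 1)) x (EuclideanSpace.single i 1) = Q
      generalize fderiv ℝ w x (EuclideanSpace.single i 1) = R
      have : P^2 + φ x ^ 2 / w x * Q - (P - φ x * R / w x)^2 =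
        -(φ x ^ 2 * (R * ((w x ^ 2)⁻¹ * R))) + φ x ^ 2 * ((w x)⁻¹ * Q) + R * (w x)⁻¹ * (2 * φ x * P) := by
        field_simp; ring
      have h2 := sq_nonneg (P - φ x * R / w x)
      linarith
    have h5 := Finset.sum_le_sum (s := Finset.univ) fun i _ => hD i
    rw [Finset.sum_add_distrib, ← Finset.mul_sum, ← grad_sq] at h5
    have h6 : q x * φ x ^ 2 ≤ - (φ x ^ 2 / w x * lap N w x) := by
      have : φ x ^ 2 / w x * (q x * w x) ≤ φ x ^ 2 / w x * (- lap N w x) := by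
        gcongr; exact h x
      have e2 : φ x ^ 2 / w x * (q x * w x) = q x * φ x ^ 2 := by field_simp
      linarith
    unfold lap at h6
    linarith

end mp


theorem exists_W {N : ℕ} (hN : 3 ≤ N) {V : Euc N → ℝ} {C : ℝ} (hC : ∀ x, |V x| ≤ C)
    (hdec : CondVDecay N V) {D : ℝ} (hD : 0 < D) :
    ∃ W : Euc N → ℝ, ContDiff ℝ 2 W ∧ (∀ x, 0 < W x) ∧ (∃ L : ℝ≥0, LipschitzWith L W) ∧
      (∃ B, ∀ x, W x ≤ B) ∧ Tendsto W (cocompact (Euc N)) (𝓝 0) ∧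
      ∀ x, D * max (V x) 0 ≤ - lap N W x := by
  obtain ⟨A, α, hA, hα, hdec⟩ := hdec
  have hN' : (3:ℝ) ≤ N := by exact_mod_cast hN
  have hC0 : 0 ≤ C := (abs_nonneg _).trans (hC 0)
  set δ : ℝ := min α ((N - 2) / 2) with hδ
  have hδ0 : 0 < δ := lt_min hα (by linarith)
  have hδα : δ ≤ α := min_le_left _ _
  have hδN : δ ≤ (N - 2) / 2 := min_le_right _ _
  clear_value δ
  set p : ℝ := -δ/2 with hp
  have hp0 : p < 0 := by linarith
  set c : ℝ := δ * (N - 2 - δ) with hc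
  have hc0 : 0 < c := mul_pos hδ0 (by linarith)
  set K : ℝ := D * ((A + C) * 2 ^ (1 - p)) / c with hK
  have h2p : (0:ℝ) < 2 ^ (1 - p) := by positivity
  have hK0 : 0 < K := by positivity
  have hs : ∀ x : Euc N, (1:ℝ) ≤ 1 + ‖x‖^2 := fun x => by nlinarith [norm_nonneg x]
  have d1 : ∀ t : ℝ, 1 ≤ t → HasDerivAt (fun t : ℝ => K * t ^ p) (K * (p * t ^ (p - 1))) t := fun t ht =>
    (Real.hasDerivAt_rpow_const (Or.inl (by linarith))).const_mul K
  have d2 : ∀ t : ℝ, 1 ≤ t → HasDerivAt (fun t : ℝ => K * (p * t ^ (p - 1)))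
      (K * (p * ((p - 1) * t ^ (p - 1 - 1)))) t := fun t ht =>
    ((Real.hasDerivAt_rpow_const (Or.inl (by linarith))).const_mul p).const_mul K
  refine ⟨fun y => K * (1 + ‖y‖^2) ^ p, ?_, ?_, ?_, ?_, ?_, ?_⟩
  · refine contDiff_const.mul ?_
    exact (contDiff_const.add (contDiff_norm_sq ℝ)).rpow_const_of_ne fun x => by linarith [hs x]
  · intro x; positivity
  · refine ⟨(2 * (K * (-p))).toNNReal, ?_⟩
    refine lipschitzWith_of_nnnorm_fderiv_le (𝕜 := ℝ) (fun x => (rad_fderiv d1 x).differentiableAt) fun x => ?_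
    rw [(rad_fderiv d1 x).fderiv, ← NNReal.coe_le_coe, coe_nnnorm, norm_smul,
      Real.coe_toNNReal _ (by nlinarith)]
    have h3 : ‖ip N x‖ ≤ ‖x‖ := by
      refine ContinuousLinearMap.opNorm_le_bound _ (norm_nonneg _) fun v => ?_
      rw [ip_apply]; exact abs_real_inner_le_norm x v
    have h4 : ‖x‖ ≤ 1 + ‖x‖^2 := by nlinarith [sq_nonneg (‖x‖ - 1)]
    have h5 : (1 + ‖x‖^2) ^ (p - 1) * (1 + ‖x‖^2) ≤ 1 := by
      have := Real.rpow_add_one (x := 1 + ‖x‖^2) (by linarith [hs x]) (p - 1)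
      rw [← this]
      exact Real.rpow_le_one_of_one_le_of_nonpos (hs x) (by linarith)
    have h6 : ‖2 * (K * (p * (1 + ‖x‖ ^ 2) ^ (p - 1)))‖ = 2 * (K * (-p)) * (1 + ‖x‖ ^ 2) ^ (p - 1) := by
      rw [Real.norm_eq_abs, abs_of_nonpos]
      · ring
      · have : 0 < K * (1 + ‖x‖ ^ 2) ^ (p - 1) := by positivity
        nlinarith
    rw [h6]
    have h7 : 0 ≤ 2 * (K * (-p)) := by nlinarith
    calc 2 * (K * (-p)) * (1 + ‖x‖ ^ 2) ^ (p - 1) * ‖ip N x‖ ≤ 2 * (K * (-p)) * (1 + ‖x‖ ^ 2) ^ (p - 1) * (1 + ‖x‖ ^ 2) := by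
          gcongr; exact h3.trans h4
      _ = 2 * (K * (-p)) * ((1 + ‖x‖ ^ 2) ^ (p - 1) * (1 + ‖x‖ ^ 2)) := by ring
      _ ≤ 2 * (K * (-p)) * 1 := by gcongr
      _ = _ := by ring
  · refine ⟨K, fun x => ?_⟩
    have := Real.rpow_le_one_of_one_le_of_nonpos (hs x) hp0.le
    nlinarith
  · have h1 : Tendsto (fun y : Euc N => 1 + ‖y‖^2) (cocompact (Euc N)) atTop := by
      apply tendsto_atTop_add_const_left
      exact (tendsto_pow_atTop two_ne_zero).comp (tendsto_norm_cocompact_atTop)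
    have h2 := (tendsto_rpow_neg_atTop (y := -p) (by linarith)).comp h1
    have := h2.const_mul K
    simpa using this
  · intro x
    rw [lap_radial d1 d2 x]
    have hsx := hs x
    have hVb : max (V x) 0 ≤ (A + C) * 2 ^ (1 - p) * (1 + ‖x‖^2) ^ (p - 1) := by
      have hmono : ∀ r : ℝ, 0 < r → (1 + ‖x‖^2) ≤ 2 * r → r ^ (p - 1) ≤ 2 ^ (1 - p) * (1 + ‖x‖^2) ^ (p - 1) := by
        intro r hr hr2
        have : (2 * r) ^ (p - 1) ≤ (1 + ‖x‖^2) ^ (p - 1) :=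
          Real.rpow_le_rpow_of_nonpos (by linarith) hr2 (by linarith)
        rw [Real.mul_rpow (by norm_num) hr.le] at this
        have e : (2:ℝ) ^ (1 - p) * 2 ^ (p - 1) = 1 := by
          rw [← Real.rpow_add (by norm_num)]; simp
        calc r ^ (p - 1) = 2 ^ (1 - p) * (2 ^ (p - 1) * r ^ (p - 1)) := by rw [← mul_assoc, e, one_mul]
          _ ≤ _ := by gcongr
      by_cases hx : 1 ≤ ‖x‖
      · have hx0 : x ≠ 0 := by rintro rfl; norm_num at hx
        have h1 := hdec x hx0
        have h2 : ‖x‖ ^ (-2 - α) ≤ (‖x‖^2) ^ (p - 1) := by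
          rw [← Real.rpow_natCast, ← Real.rpow_mul (norm_nonneg _)]
          apply Real.rpow_le_rpow_of_exponent_le hx
          push_cast; rw [hp]; linarith
        have h3 := hmono (‖x‖^2) (by positivity) (by nlinarith)
        have h4 : 0 ≤ (2:ℝ) ^ (1 - p) * (1 + ‖x‖^2) ^ (p - 1) := by positivity
        calc max (V x) 0 ≤ A * ‖x‖ ^ (-2 - α) := h1
          _ ≤ A * (2 ^ (1 - p) * (1 + ‖x‖^2) ^ (p - 1)) := by gcongr; exact h2.trans h3
          _ ≤ (A + C) * (2 ^ (1 - p) * (1 + ‖x‖^2) ^ (p - 1)) := by gcongr; linarith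
          _ = _ := by ring
      · push Not at hx
        have h3 := hmono 1 one_pos (by nlinarith [norm_nonneg x])
        rw [Real.one_rpow] at h3
        have h1 : max (V x) 0 ≤ C := max_le ((le_abs_self _).trans (hC x)) hC0
        calc max (V x) 0 ≤ C * 1 := by linarith
          _ ≤ (A + C) * (2 ^ (1 - p) * (1 + ‖x‖^2) ^ (p - 1)) := by gcongr; linarith
          _ = _ := by ring
    have hq0 : 0 < (1 + ‖x‖^2) ^ (p - 1) := by positivity
    have hq : (1 + ‖x‖^2) ^ (p - 1 - 1) * ‖x‖^2 ≤ (1 + ‖x‖^2) ^ (p - 1) := by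
      have := Real.rpow_add_one (x := 1 + ‖x‖^2) (by linarith [hs x]) (p - 1 - 1)
      rw [sub_add_cancel] at this
      rw [this]
      gcongr; linarith
    have hpp : 0 < p * (p - 1) := mul_pos_of_neg_of_neg hp0 (by linarith)
    have hm : K * (4 * (p * (p - 1))) * ((1 + ‖x‖^2) ^ (p - 1 - 1) * ‖x‖^2) ≤
        K * (4 * (p * (p - 1))) * (1 + ‖x‖^2) ^ (p - 1) := by gcongr
    have hKc : K * c = D * ((A + C) * 2 ^ (1 - p)) := by rw [hK]; field_simp
    have h9 : D * max (V x) 0 ≤ K * c * (1 + ‖x‖^2) ^ (p - 1) := by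
      rw [hKc]
      calc _ ≤ D * ((A + C) * 2 ^ (1 - p) * (1 + ‖x‖^2) ^ (p - 1)) := by gcongr
        _ = _ := by ring
    have h10 : c = -(2 * N * p) - 4 * (p * (p-1)) := by rw [hc, hp]; ring
    rw [h10] at h9
    nlinarith

theorem exists_phi {N : ℕ} {V V₁ V₂ : Euc N → ℝ} (hV : CondV N V V₁ V₂) (hcV : Continuous V) {lam : ℝ}
    (hlam : Lam N V < lam) : ∃ φ : Euc N → ℝ, ContDiff ℝ 2 φ ∧ HasCompactSupport φ ∧
      (∫ x, V x * φ x ^ 2) = 1 ∧ ∫ x, ‖gradient φ x‖ ^ 2 < lam := by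
  obtain ⟨-, -, ⟨x0, hx0⟩, -⟩ := hV
  set S : ℝ → Set ℝ := fun R => { t : ℝ | ∃ u : Euc N → ℝ, ContDiff ℝ (⊤ : ℕ∞) u ∧ HasCompactSupport u ∧
    tsupport u ⊆ ball (0 : Euc N) R ∧
    (∫ x, V x * u x ^ 2) = 1 ∧ t = ∫ x, ‖gradient u x‖ ^ 2 } with hS
  have hSm : ∀ R R', R ≤ R' → S R ⊆ S R' := by
    rintro R R' h t ⟨u, a, b, c, d⟩
    exact ⟨u, a, b, c.trans (ball_subset_ball h), d⟩
  have hbd : ∀ R, BddBelow (S R) := by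
    intro R
    refine ⟨0, ?_⟩
    rintro t ⟨u, a, b, c, d, rfl⟩
    exact integral_nonneg fun x => by positivity
  have hne : ∃ R0, (S R0).Nonempty := by
    obtain ⟨r, hr, hb⟩ := Metric.isOpen_iff.1 (isOpen_lt continuous_const hcV) x0 hx0
    let b : ContDiffBump x0 := ⟨r/4, r/2, by positivity, by linarith⟩
    have hbc : Continuous (b : Euc N → ℝ) := b.continuous
    have hcpos : 0 < ∫ x, V x * b x ^ 2 := by
      have hsupp : HasCompactSupport (fun x => V x * b x ^ 2) :=
        HasCompactSupport.mul_left (b.hasCompactSupport.comp_left (g := fun t : ℝ => t ^ 2) (by norm_num))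
      refine Continuous.integral_pos_of_hasCompactSupport_nonneg_nonzero (x := x0) (by fun_prop) hsupp ?_ ?_
      · intro x
        by_cases hx : x ∈ ball x0 r
        · have : 0 < V x := hb hx
          simp only [Pi.zero_apply]; positivity
        · have : b x = 0 := b.zero_of_le_dist (by
            simp only [mem_ball, not_lt] at hx
            change r/2 ≤ _
            linarith)
          simp [this]
      · have : b x0 = 1 := b.one_of_mem_closedBall (mem_closedBall_self (by change 0 ≤ r/4; positivity))
        simp [this]; exact hx0.ne'
    set c := ∫ x, V x * b x ^ 2 with hc
    refine ⟨‖x0‖ + r, _, fun x => (Real.sqrt c)⁻¹ * b x, ?_, ?_, ?_, ?_, rfl⟩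
    · exact contDiff_const.mul b.contDiff
    · exact b.hasCompactSupport.mul_left
    · refine (tsupport_mul_subset_right (f := fun _ => (Real.sqrt c)⁻¹) (g := b)).trans ?_
      rw [b.tsupport_eq]
      intro y hy
      have : dist y x0 ≤ r / 2 := hy
      rw [mem_ball, dist_zero_right]
      have h2 : ‖y‖ ≤ ‖x0‖ + dist y x0 := by
        rw [dist_eq_norm]
        calc ‖y‖ = ‖x0 + (y - x0)‖ := by congr 1; abel
          _ ≤ _ := norm_add_le _ _
      linarith
    · have : ∀ x, V x * ((Real.sqrt c)⁻¹ * b x)^2 = c⁻¹ * (V x * b x ^ 2) := by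
        intro x; rw [mul_pow, inv_pow, Real.sq_sqrt hcpos.le]; ring
      simp only [this]
      rw [integral_const_mul]
      exact inv_mul_cancel₀ hcpos.ne'
  obtain ⟨R0, hR0⟩ := hne
  have hanti : Antitone (fun R => lam1 N V (max R R0)) := by
    intro R R' h
    refine csInf_le_csInf (hbd _) (hR0.mono (hSm _ _ (le_max_right _ _))) (hSm _ _ ?_)
    exact max_le_max_right _ h
  have hbb : BddBelow (range fun R => lam1 N V (max R R0)) := by
    refine ⟨0, ?_⟩
    rintro _ ⟨R, rfl⟩
    refine Real.sInf_nonneg ?_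
    rintro t ⟨u, a, b, c, d, rfl⟩
    exact integral_nonneg fun x => by positivity
  have ht := tendsto_atTop_ciInf hanti hbb
  have ht2 : Tendsto (lam1 N V) atTop (𝓝 (⨅ R, lam1 N V (max R R0))) := by
    refine ht.congr' ?_
    filter_upwards [eventually_ge_atTop R0] with R hR
    rw [max_eq_left hR]
  have hL : Lam N V = _ := ht2.limUnder_eq
  have hev : ∀ᶠ R in atTop, lam1 N V R < lam := by
    rw [hL] at hlam
    exact ht2.eventually (gt_mem_nhds hlam)
  obtain ⟨R, hR1, hR2⟩ := (hev.and (eventually_ge_atTop R0)).exists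
  obtain ⟨t, ⟨u, a, b, c, d, e⟩, h⟩ := exists_lt_of_csInf_lt (hR0.mono (hSm _ _ hR2)) hR1
  exact ⟨u, contDiff_infty.1 a 2, b, d, by rw [← e]; exact h⟩


/-- Technical bundle of the constants used in the monotone iteration. -/
structure Setup (N : ℕ) (V : Euc N → ℝ) (f : ℝ → ℝ) (lam k M C Lf H β : ℝ) : Prop where
  hlam : 0 < lam
  hk : k = lam * (C + Lf) + 1
  hM : 0 < M
  hC : ∀ x, |V x| ≤ C
  hL : 0 ≤ Lf
  hLf : ∀ a b, 0 ≤ a → a ≤ M → 0 ≤ b → b ≤ M → |f a - f b| ≤ Lf * |a - b|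
  f0 : f 0 = 0
  hfM : C * M ≤ f M
  hH : 0 ≤ H
  hβ : 0 < β
  hβ1 : β ≤ 1
  hV : ∀ x y, |V x - V y| ≤ H * ‖x - y‖ ^ β
  hfc : Continuous f
  hVc : Continuous V

/-- The shifted nonlinearity. -/
def GG {N : ℕ} (V : Euc N → ℝ) (f : ℝ → ℝ) (lam k : ℝ) (u : Euc N → ℝ) (x : Euc N) : ℝ :=
  k * u x + lam * (V x * u x - f (u x))

namespace Setup
variable {N : ℕ} {V : Euc N → ℝ} {f : ℝ → ℝ} {lam k M C Lf H β : ℝ}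

theorem C0 (S : Setup N V f lam k M C Lf H β) : 0 ≤ C := (abs_nonneg _).trans (S.hC 0)

theorem k0 (S : Setup N V f lam k M C Lf H β) : 0 < k := by
  have h1 := S.hlam
  have h2 := S.C0
  have h3 := S.hL
  rw [S.hk]; positivity

theorem gdiff (S : Setup N V f lam k M C Lf H β) (x : Euc N) {a b : ℝ} (ha : 0 ≤ a) (hab : a ≤ b)
    (hb : b ≤ M) : b - a ≤ (k * b + lam * (V x * b - f b)) - (k * a + lam * (V x * a - f a)) := by
  have h1 := S.hLf b a (ha.trans hab) hb ha (hab.trans hb)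
  rw [abs_of_nonneg (sub_nonneg.2 hab)] at h1
  have h2 := (le_abs_self _).trans h1
  have h3 := (neg_le_of_abs_le (S.hC x))
  have h4 : 0 ≤ (V x + C) * (b - a) := mul_nonneg (by linarith) (by linarith)
  have h5 : 0 ≤ lam * ((V x + C) * (b - a) + (Lf * (b - a) - (f b - f a))) :=
    mul_nonneg S.hlam.le (by linarith)
  rw [S.hk]
  linarith

theorem gM (S : Setup N V f lam k M C Lf H β) (x : Euc N) :
    k * M + lam * (V x * M - f M) ≤ k * M := by
  have h1 : V x * M ≤ C * M := by
    have := S.hM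
    have := (le_abs_self _).trans (S.hC x)
    gcongr
  have := S.hfM
  nlinarith [S.hlam]

theorem gnn (S : Setup N V f lam k M C Lf H β) {u : Euc N → ℝ} (h0 : ∀ x, 0 ≤ u x) (hM : ∀ x, u x ≤ M)
    (x : Euc N) : u x ≤ GG V f lam k u x := by
  have := S.gdiff x le_rfl (h0 x) (hM x)
  unfold GG
  simp [S.f0] at this
  linarith

theorem gle (S : Setup N V f lam k M C Lf H β) {u : Euc N → ℝ} (h0 : ∀ x, 0 ≤ u x) (hM : ∀ x, u x ≤ M)
    (x : Euc N) : GG V f lam k u x ≤ k * M := by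
  have := S.gdiff x (h0 x) (hM x) le_rfl
  have h2 := S.gM x
  have h3 := hM x
  unfold GG
  linarith

theorem gabs (S : Setup N V f lam k M C Lf H β) {u : Euc N → ℝ} (h0 : ∀ x, 0 ≤ u x) (hM : ∀ x, u x ≤ M)
    (x : Euc N) : |GG V f lam k u x| ≤ k * M := by
  rw [abs_of_nonneg ((h0 x).trans (S.gnn h0 hM x))]
  exact S.gle h0 hM x

theorem gmono (S : Setup N V f lam k M C Lf H β) {u v : Euc N → ℝ} (h0 : ∀ x, 0 ≤ u x)
    (huv : ∀ x, u x ≤ v x) (hM : ∀ x, v x ≤ M)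
    (x : Euc N) : GG V f lam k u x ≤ GG V f lam k v x := by
  have := S.gdiff x (h0 x) (huv x) (hM x)
  have := huv x
  unfold GG
  linarith

theorem gcont (S : Setup N V f lam k M C Lf H β) {u : Euc N → ℝ} (hu : Continuous u) :
    Continuous (GG V f lam k u) := by
  have := S.hVc
  have := S.hfc
  unfold GG
  fun_prop

theorem gmeas (S : Setup N V f lam k M C Lf H β) {u : Euc N → ℝ} (hu : Measurable u) :
    Measurable (GG V f lam k u) := by
  have := S.hVc.measurable
  have := S.hfc.measurable
  unfold GG
  fun_prop

theorem ghol (S : Setup N V f lam k M C Lf H β) {u : Euc N → ℝ} (h0 : ∀ x, 0 ≤ u x) (hM : ∀ x, u x ≤ M)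
    {L : ℝ≥0} (hu : LipschitzWith L u) : ∃ K, 0 ≤ K ∧
      ∀ x y, |GG V f lam k u x - GG V f lam k u y| ≤ K * ‖x - y‖ ^ β := by
  have hk := S.k0
  have hlam := S.hlam
  have hC := S.C0
  have hL := S.hL
  have hMM := S.hM
  have hH := S.hH
  refine ⟨(k + lam * C + lam * Lf) * (L + M) + lam * (M * H), by positivity, fun x y => ?_⟩
  have hr : 0 ≤ ‖x - y‖ := norm_nonneg _
  have hd : |u x - u y| ≤ (L + M) * ‖x - y‖ ^ β := by
    have h1 : |u x - u y| ≤ L * ‖x - y‖ := by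
      have := hu.dist_le_mul x y
      rwa [Real.dist_eq, dist_eq_norm] at this
    have h2 : |u x - u y| ≤ M := by
      rw [abs_le]; constructor <;> linarith [h0 x, h0 y, hM x, hM y]
    rcases le_total ‖x - y‖ 1 with h | h
    · have h3 : ‖x - y‖ ≤ ‖x - y‖ ^ β := by
        rcases hr.eq_or_lt with h4 | h4
        · rw [← h4, Real.zero_rpow S.hβ.ne']
        · simpa using Real.rpow_le_rpow_of_exponent_ge h4 h S.hβ1
      calc _ ≤ L * ‖x - y‖ := h1
        _ ≤ (L + M) * ‖x - y‖ ^ β := by gcongr; linarith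
    · have h3 : 1 ≤ ‖x - y‖ ^ β := Real.one_le_rpow h S.hβ.le
      calc _ ≤ M * 1 := by linarith
        _ ≤ (L + M) * ‖x - y‖ ^ β := by
          gcongr
          have : (0:ℝ) ≤ L := L.2
          linarith
  have e : GG V f lam k u x - GG V f lam k u y = k * (u x - u y) + lam * (V x * (u x - u y))
    + lam * (u y * (V x - V y)) - lam * (f (u x) - f (u y)) := by unfold GG; ring
  have hf := S.hLf (u x) (u y) (h0 x) (hM x) (h0 y) (hM y)
  have hv := S.hV x y
  have hCx := S.hC x
  have hy0 := h0 y
  have hyM := hM y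
  have t1 : |k * (u x - u y)| ≤ k * |u x - u y| := by rw [abs_mul, abs_of_pos hk]
  have t2 : |lam * (V x * (u x - u y))| ≤ lam * (C * |u x - u y|) := by
    rw [abs_mul, abs_mul, abs_of_pos hlam]; gcongr
  have t3 : |lam * (u y * (V x - V y))| ≤ lam * (M * (H * ‖x - y‖ ^ β)) := by
    rw [abs_mul, abs_mul, abs_of_pos hlam, abs_of_nonneg hy0]; gcongr
  have t4 : |lam * (f (u x) - f (u y))| ≤ lam * (Lf * |u x - u y|) := by
    rw [abs_mul, abs_of_pos hlam]; gcongr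
  have t5 : |GG V f lam k u x - GG V f lam k u y| ≤ k * |u x - u y| + lam * (C * |u x - u y|) +
      lam * (M * (H * ‖x - y‖ ^ β)) + lam * (Lf * |u x - u y|) := by
    rw [e]
    refine (abs_sub _ _).trans ?_
    refine add_le_add ((abs_add_le _ _).trans (add_le_add ((abs_add_le _ _).trans (add_le_add t1 t2)) t3)) t4
  calc _ ≤ _ := t5
    _ = (k + lam * C + lam * Lf) * |u x - u y| + lam * (M * (H * ‖x - y‖ ^ β)) := by ring
    _ ≤ (k + lam * C + lam * Lf) * ((L + M) * ‖x - y‖ ^ β) + lam * (M * (H * ‖x - y‖ ^ β)) := by gcongr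
    _ = _ := by ring

theorem reg (S : Setup N V f lam k M C Lf H β) {u : Euc N → ℝ} (h0 : ∀ x, 0 ≤ u x) (hM : ∀ x, u x ≤ M)
    {L : ℝ≥0} (hu : LipschitzWith L u) : ContDiff ℝ 2 (RR N k (GG V f lam k u)) ∧
      ∀ x, lap N (RR N k (GG V f lam k u)) x = k * RR N k (GG V f lam k u) x - GG V f lam k u x := by
  obtain ⟨K, hK, h⟩ := S.ghol h0 hM hu
  exact RR_reg S.k0 (S.gcont hu.continuous) (S.gabs h0 hM) hK S.hβ S.hβ1 h

/-- The iteration. -/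
def it (N : ℕ) (V : Euc N → ℝ) (f : ℝ → ℝ) (lam k : ℝ) (u0 : Euc N → ℝ) : ℕ → Euc N → ℝ
  | 0 => u0
  | n + 1 => RR N k (GG V f lam k (it N V f lam k u0 n))

theorem it_all (S : Setup N V f lam k M C Lf H β) {W : Euc N → ℝ} (hW : ContDiff ℝ 2 W)
    (hW0 : ∀ x, 0 < W x) {LW : ℝ≥0} (hWL : LipschitzWith LW W)
    (hsup : ∀ x, lam * M * max (V x) 0 ≤ - lap N W x) (hf : ∀ a, 0 ≤ a → 0 ≤ f a) (n : ℕ) :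
    (∀ x, 0 < it N V f lam k (fun x => min M (W x)) n x) ∧
    (∀ x, it N V f lam k (fun x => min M (W x)) n x ≤ M) ∧
    (∃ L : ℝ≥0, LipschitzWith L (it N V f lam k (fun x => min M (W x)) n)) ∧
    (∀ x, it N V f lam k (fun x => min M (W x)) (n+1) x ≤ it N V f lam k (fun x => min M (W x)) n x) := by
  induction n with
  | zero =>
    have a1 : ∀ x, 0 < min M (W x) := fun x => lt_min S.hM (hW0 x)
    have a2 : ∀ x, min M (W x) ≤ M := fun x => min_le_left _ _
    have a3 : LipschitzWith LW (fun x => min M (W x)) := by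
      simpa using (LipschitzWith.const (α := Euc N) M).min hWL
    refine ⟨a1, a2, ⟨_, a3⟩, fun x => ?_⟩
    have a0 := fun x => (a1 x).le
    obtain ⟨r1, r2⟩ := S.reg a0 a2 a3
    have b1 : ∀ x, RR N k (GG V f lam k (fun x => min M (W x))) x ≤ M := by
      intro x
      have := RR_mono S.k0 (S.gmeas a3.continuous.measurable) (measurable_const (a := k * M))
        (S.gabs a0 a2) (fun x => by
          rw [abs_of_nonneg (mul_nonneg S.k0.le S.hM.le)]) (S.gle a0 a2) x
      rw [RR_const S.k0] at this
      have hk := S.k0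
      rwa [mul_div_cancel_left₀ _ hk.ne'] at this
    refine le_min (b1 x) ?_
    have := max_principle S.k0 (z := fun x => RR N k (GG V f lam k (fun x => min M (W x))) x - W x)
      (r1.sub hW) (B := M) (fun x => by linarith [b1 x, hW0 x]) (fun x => ?_) x
    · change RR N k (GG V f lam k (fun x => min M (W x))) x ≤ W x
      linarith
    · rw [lap_sub r1 hW, r2]
      have hG : GG V f lam k (fun x => min M (W x)) x ≤ k * W x + lam * M * max (V x) 0 := by
        unfold GG
        simp only
        have h1 : min M (W x) ≤ W x := min_le_right _ _
        have h2 := hf _ (a0 x)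
        have h3 : V x * min M (W x) ≤ max (V x) 0 * M := by
          calc V x * min M (W x) ≤ max (V x) 0 * min M (W x) := by
                have := a0 x
                gcongr; exact le_max_left _ _
            _ ≤ _ := by gcongr; exact a2 x
        have h4 := mul_le_mul_of_nonneg_left h1 S.k0.le
        have h5 : lam * (V x * min M (W x) - f (min M (W x))) ≤ lam * (max (V x) 0 * M) :=
          mul_le_mul_of_nonneg_left (by linarith) S.hlam.le
        linarith
      have := hsup x
      linarith
  | succ n ih =>
    obtain ⟨p, q, ⟨L, hL⟩, r⟩ := ih
    have a0 := fun x => (p x).le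
    have p' : ∀ x, 0 < it N V f lam k (fun x => min M (W x)) (n+1) x := fun x =>
      RR_pos S.k0 (S.gcont hL.continuous) (S.gabs a0 q)
        (fun x => (a0 x).trans (S.gnn a0 q x)) (y := 0) ((p 0).trans_le (S.gnn a0 q 0)) x
    have q' : ∀ x, it N V f lam k (fun x => min M (W x)) (n+1) x ≤ M := fun x => (r x).trans (q x)
    obtain ⟨L', hL'⟩ := RR_lip (N := N) S.k0 (S.gmeas hL.continuous.measurable) (S.gabs a0 q)
    have hL'' : LipschitzWith L' (it N V f lam k (fun x => min M (W x)) (n+1)) := hL'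
    refine ⟨p', q', ⟨L', hL'⟩, fun x => ?_⟩
    exact RR_mono S.k0 (S.gmeas hL''.continuous.measurable) (S.gmeas hL.continuous.measurable)
      (S.gabs (fun x => (p' x).le) q') (S.gabs a0 q) (S.gmono (fun x => (p' x).le) r q) x

set_option maxHeartbeats 1000000 in
theorem solve (S : Setup N V f lam k M C Lf H β) {W : Euc N → ℝ} (hW : ContDiff ℝ 2 W)
    (hW0 : ∀ x, 0 < W x) {LW : ℝ≥0} (hWL : LipschitzWith LW W)
    (hsup : ∀ x, lam * M * max (V x) 0 ≤ - lap N W x) (hf : ∀ a, 0 ≤ a → 0 ≤ f a)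
    (hWd : Tendsto W (cocompact (Euc N)) (𝓝 0)) (hfd : HasDerivAt f 0 0)
    {φ : Euc N → ℝ} (hφ : ContDiff ℝ 2 φ) (hφc : HasCompactSupport φ) (h1 : (∫ x, V x * φ x ^ 2) = 1)
    (h2 : ∫ x, ‖gradient φ x‖ ^ 2 < lam) : ∃ u : Euc N → ℝ, IsSolution N V f lam u := by
  have hall := S.it_all hW hW0 hWL hsup hf
  set U := it N V f lam k (fun x => min M (W x)) with hU
  have hUs : ∀ n, U (n+1) = RR N k (GG V f lam k (U n)) := fun n => rfl
  have hU0 : ∀ x, U 0 x = min M (W x) := fun x => rfl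
  clear_value U
  have hpos := fun n => (hall n).1
  have hUM := fun n => (hall n).2.1
  have hlip := fun n => (hall n).2.2.1
  have hdec := fun n => (hall n).2.2.2
  have hcont : ∀ n, Continuous (U n) := fun n => (hlip n).choose_spec.continuous
  have h0 := fun n x => (hpos n x).le
  have hanti : ∀ x, Antitone (fun n => U n x) := fun x => antitone_nat_of_succ_le fun n => hdec n x
  set u : Euc N → ℝ := fun x => ⨅ n, U n x with hu
  have hbdd : ∀ x, BddBelow (range fun n => U n x) := fun x => ⟨0, by rintro _ ⟨n, rfl⟩; exact h0 n x⟩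
  have hlim : ∀ x, Tendsto (fun n => U n x) atTop (𝓝 (u x)) := fun x =>
    tendsto_atTop_ciInf (hanti x) (hbdd x)
  have hu0 : ∀ x, 0 ≤ u x := fun x => ge_of_tendsto' (hlim x) fun n => h0 n x
  have huU : ∀ n x, u x ≤ U n x := fun n x => ciInf_le (hbdd x) n
  have huM : ∀ x, u x ≤ M := fun x => (huU 0 x).trans (hUM 0 x)
  have hum : Measurable u := measurable_of_tendsto_metrizable (fun n => (hcont n).measurable)
    (tendsto_pi_nhds.2 hlim)
  have hfix : ∀ x, u x = RR N k (GG V f lam k u) x := by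
    intro x
    have t1 : Tendsto (fun n => RR N k (GG V f lam k (U n)) x) atTop (𝓝 (RR N k (GG V f lam k u) x)) :=
      RR_tendsto S.k0 (fun n => S.gmeas (hcont n).measurable) (fun n => S.gabs (h0 n) (hUM n))
        (fun y => by
          unfold GG
          have t2 := hlim y
          have t3 := (S.hfc.tendsto (u y)).comp t2
          exact (t2.const_mul k).add (((t2.const_mul (V y)).sub t3).const_mul lam)) x
    simp only [← hUs] at t1
    exact tendsto_nhds_unique ((tendsto_add_atTop_iff_nat 1).2 (hlim x)) t1
  have hfix' : u = RR N k (GG V f lam k u) := funext hfix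
  obtain ⟨L, hL⟩ := RR_lip (N := N) S.k0 (S.gmeas hum) (S.gabs hu0 huM)
  rw [← hfix'] at hL
  obtain ⟨r1, r2⟩ := S.reg hu0 huM hL
  rw [← hfix'] at r1 r2
  have hnz : ∃ y, 0 < u y := by
    by_contra! hcon
    have hz : ∀ x, u x = 0 := fun x => le_antisymm (hcon x) (hu0 x)
    have hquot : ∀ n x, |f (U n x) / U n x| ≤ Lf := by
      intro n x
      have := S.hLf (U n x) 0 (h0 n x) (hUM n x) le_rfl S.hM.le
      rw [S.f0, sub_zero, sub_zero] at this
      rw [abs_div, div_le_iff₀ (abs_pos.2 (hpos n x).ne')]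
      exact this
    have hpic : ∀ n, ∫ x, (lam * V x - lam * (f (U n x) / U n x)) * φ x ^ 2 ≤ ∫ x, ‖gradient φ x‖ ^ 2 := by
      intro n
      obtain ⟨s1, s2⟩ := S.reg (h0 n) (hUM n) (hlip n).choose_spec
      rw [← hUs] at s1 s2
      refine picone hφ hφc s1 (hpos (n+1)) ?_ fun x => ?_
      · exact (continuous_const.mul S.hVc).sub (continuous_const.mul
          ((S.hfc.comp (hcont n)).div (hcont n) fun x => (hpos n x).ne'))
      · rw [s2]
        have e1 : GG V f lam k (U n) x = (k + lam * V x - lam * (f (U n x) / U n x)) * U n x := by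
          unfold GG
          have := (hpos n x).ne'
          field_simp
          ring
        have e2 : 0 ≤ k + lam * V x - lam * (f (U n x) / U n x) := by
          have := (h0 n x).trans (S.gnn (h0 n) (hUM n) x)
          rw [e1] at this
          exact nonneg_of_mul_nonneg_left this (hpos n x)
        have e3 := mul_le_mul_of_nonneg_left (hdec n x) e2
        rw [e1]
        linarith
    have hφs : HasCompactSupport (fun x => φ x ^ 2) :=
      hφc.comp_left (g := fun t : ℝ => t ^ 2) (by norm_num)
    have hφi : Integrable (fun x => φ x ^ 2) :=
      Continuous.integrable_of_hasCompactSupport (hφ.continuous.pow 2) hφs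
    have hT : Tendsto (fun n => ∫ x, (lam * V x - lam * (f (U n x) / U n x)) * φ x ^ 2) atTop
        (𝓝 (∫ x, lam * (V x * φ x ^ 2))) := by
      refine tendsto_integral_of_dominated_convergence (fun x => (lam * C + lam * Lf) * φ x ^ 2) ?_ ?_ ?_ ?_
      · intro n
        refine Continuous.aestronglyMeasurable ?_
        exact ((continuous_const.mul S.hVc).sub (continuous_const.mul
          ((S.hfc.comp (hcont n)).div (hcont n) fun x => (hpos n x).ne'))).mul (hφ.continuous.pow 2)
      · exact hφi.const_mul _
      · intro n
        refine Eventually.of_forall fun x => ?_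
        rw [Real.norm_eq_abs, abs_mul, abs_of_nonneg (sq_nonneg (φ x))]
        refine mul_le_mul_of_nonneg_right ?_ (sq_nonneg _)
        refine (abs_sub _ _).trans ?_
        rw [abs_mul, abs_mul, abs_of_pos S.hlam]
        have := S.hlam
        have := S.hC x
        have := hquot n x
        gcongr
      · refine Eventually.of_forall fun x => ?_
        have t0 : Tendsto (fun n => U n x) atTop (𝓝[≠] 0) := by
          refine tendsto_nhdsWithin_iff.2 ⟨?_, Eventually.of_forall fun n => (hpos n x).ne'⟩
          have := hlim x
          rwa [hz x] at this
        have t1 := (hasDerivAt_iff_tendsto_slope.1 hfd).comp t0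
        have t2 : Tendsto (fun n => f (U n x) / U n x) atTop (𝓝 0) := by
          refine t1.congr fun n => ?_
          simp [slope_def_field, S.f0]
        have t3 := ((tendsto_const_nhds (x := lam * V x)).sub (t2.const_mul lam)).mul_const (φ x ^ 2)
        have e : (lam * V x - lam * 0) * φ x ^ 2 = lam * (V x * φ x ^ 2) := by ring
        rwa [e] at t3
    have := le_of_tendsto' hT hpic
    rw [integral_const_mul, h1] at this
    linarith
  obtain ⟨y, hy⟩ := hnz
  have hup : ∀ x, 0 < u x := by
    intro x
    rw [hfix x]
    exact RR_pos S.k0 (S.gcont hL.continuous) (S.gabs hu0 huM)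
        (fun x => (hu0 x).trans (S.gnn hu0 huM x)) (y := y) (hy.trans_le (S.gnn hu0 huM y)) x
  refine ⟨u, r1, hup, fun x => ?_, ?_⟩
  · rw [r2]; unfold GG; ring
  · refine squeeze_zero hu0 (fun x => ?_) hWd
    exact (huU 0 x).trans (by rw [hU0]; exact min_le_right _ _)

end Setup

/-- for every `λ > Λ`, problem `(P_λ)` has at least one solution. -/
theorem stmt1 (N : ℕ) (hN : 3 ≤ N) (V V₁ V₂ : Euc N → ℝ)
    (hV : CondV N V V₁ V₂) (hdec : CondVDecay N V)
    (f : ℝ → ℝ) (hf : CondF N V f)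
    (lam : ℝ) (hlam : Lam N V < lam) :
    ∃ u : Euc N → ℝ, IsSolution N V f lam u := by
  have hV' := hV
  obtain ⟨⟨H, β, hβ, hβ1, hH⟩, ⟨C0, hC0⟩, -⟩ := hV
  obtain ⟨hf1, hfn, hf0, hfd, -, -, ⟨L, hL, hLt⟩⟩ := hf
  have hVc : Continuous V := hH.continuous hβ
  obtain ⟨φ, p1, p2, p3, p4⟩ := exists_phi hV' hVc hlam
  have hlam0 : 0 < lam := lt_of_le_of_lt (integral_nonneg fun x => by positivity) p4
  set C : ℝ := ⨆ x, |V x| with hCdef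
  have hC : ∀ x, |V x| ≤ C := fun x => le_ciSup (f := fun x => |V x|)
    ⟨C0, by rintro _ ⟨x, rfl⟩; exact hC0 x⟩ x
  have hCnn : 0 ≤ C := (abs_nonneg _).trans (hC 0)
  obtain ⟨M, hM1, hM⟩ := ((hL.eventually (lt_mem_nhds hLt)).and (eventually_gt_atTop 0)).exists
  have hfM : C * M ≤ f M := by
    have : C < f M / M := by exact_mod_cast hM1
    exact ((lt_div_iff₀ hM).1 this).le
  obtain ⟨Lf, hLf⟩ := (isCompact_Icc (a := (0:ℝ)) (b := M)).exists_bound_of_continuousOn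
    (hf1.continuous_deriv (by norm_num)).continuousOn
  have hLf0 : 0 ≤ Lf := (norm_nonneg _).trans (hLf 0 ⟨le_rfl, hM.le⟩)
  have S : Setup N V f lam (lam * (C + Lf) + 1) M C Lf H β := by
    refine ⟨hlam0, rfl, hM, hC, hLf0, ?_, hf0, hfM, H.2, hβ, by exact_mod_cast hβ1, ?_, hf1.continuous, hVc⟩
    · intro a b ha haM hb hbM
      have := Convex.norm_image_sub_le_of_norm_deriv_le (𝕜 := ℝ) (f := f) (s := Icc 0 M) (x := b) (y := a)
        (fun x _ => hf1.differentiable (by norm_num) x) hLf (convex_Icc 0 M) ⟨hb, hbM⟩ ⟨ha, haM⟩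
      simpa using this
    · intro x y
      have := hH.dist_le x y
      rwa [Real.dist_eq, dist_eq_norm] at this
  obtain ⟨W, w1, w2, ⟨LW, w3⟩, -, w5, w6⟩ := exists_W hN hC hdec (D := lam * M) (by positivity)
  have hfd' : HasDerivAt f 0 0 := by
    have := (hf1.differentiable (by norm_num) 0).hasDerivAt
    rwa [hfd] at this
  exact S.solve w1 w2 w3 w6 hfn w5 hfd' p1 p2 p3 p4

end
end

section
/- Let N ≥ 3, let V satisfy condition (V) and the decay condition that there exist A, α > 0 with V⁺(x) ≤ A|x|^{-2-α} for all x ∈ ℝ^N, and let f satisfy conditions (f1), (f2), (f3). Then for every λ > Λ, problem (P_λ) has at most one solution: if u and v are both solutions of (P_λ), then u = v on ℝ^N. -/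
open MeasureTheory Filter Metric Set
open scoped ENNReal NNReal Topology

noncomputable section

/-- `g` has second derivative `d` at `x` along the line in direction `e`. -/
def LineD2 {N : ℕ} (g : Euc N → ℝ) (x e : Euc N) (d : ℝ) : Prop :=
  ∃ φ : ℝ → ℝ, (∀ᶠ s in 𝓝 (0 : ℝ), HasDerivAt (fun s : ℝ => g (x + s • e)) (φ s) s) ∧
    HasDerivAt φ d 0

lemma LineD2.add {N : ℕ} {g k : Euc N → ℝ} {x e : Euc N} {a b : ℝ}
    (hg : LineD2 g x e a) (hk : LineD2 k x e b) : LineD2 (fun y => g y + k y) x e (a + b) := by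
  obtain ⟨φ, h1, h2⟩ := hg
  obtain ⟨ψ, h3, h4⟩ := hk
  refine ⟨fun s => φ s + ψ s, ?_, h2.add h4⟩
  filter_upwards [h1, h3] with s hs hs'
  exact hs.add hs'

lemma LineD2.const_mul {N : ℕ} {g : Euc N → ℝ} {x e : Euc N} {a : ℝ} (c : ℝ)
    (hg : LineD2 g x e a) : LineD2 (fun y => c * g y) x e (c * a) := by
  obtain ⟨φ, h1, h2⟩ := hg
  refine ⟨fun s => c * φ s, ?_, h2.const_mul c⟩
  filter_upwards [h1] with s hs
  exact hs.const_mul c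

lemma lineD2_of_contDiff {N : ℕ} {u : Euc N → ℝ} (hu : ContDiff ℝ 2 u) (x e : Euc N) :
    LineD2 u x e (fderiv ℝ (fun y => fderiv ℝ u y e) x e) := by
  have hline : ∀ s : ℝ, HasDerivAt (fun s : ℝ => x + s • e) e s := fun s => by
    simpa using ((hasDerivAt_id s).smul_const e).const_add x
  refine ⟨fun s => fderiv ℝ u (x + s • e) e, ?_, ?_⟩
  · refine Eventually.of_forall fun s => ?_
    have h1 : HasFDerivAt u (fderiv ℝ u (x + s • e)) (x + s • e) :=
      (hu.differentiable (by norm_num) _).hasFDerivAt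
    exact h1.comp_hasDerivAt s (hline s)
  · have h2 : ContDiff ℝ 1 (fun y => fderiv ℝ u y e) :=
      (hu.fderiv_right (m := 1) (by norm_num)).clm_apply contDiff_const
    have h3 : HasFDerivAt (fun y => fderiv ℝ u y e) (fderiv ℝ (fun y => fderiv ℝ u y e) x)
        (x + (0 : ℝ) • e) := by
      rw [zero_smul, add_zero]
      exact (h2.differentiable (by norm_num) _).hasFDerivAt
    exact h3.comp_hasDerivAt (0 : ℝ) (hline 0)

lemma LineD2.nonpos {N : ℕ} {g : Euc N → ℝ} {x e : Euc N} {d : ℝ}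
    (hg : LineD2 g x e d) (hm : IsLocalMax g x) : d ≤ 0 := by
  obtain ⟨φ, h1, h2⟩ := hg
  by_contra! hd
  set G : ℝ → ℝ := fun s => g (x + s • e) with hG
  have hmax : IsLocalMax G 0 := by
    have hc : ContinuousAt (fun s : ℝ => x + s • e) 0 := by fun_prop
    have : Tendsto (fun s : ℝ => x + s • e) (𝓝 0) (𝓝 x) := by
      simpa [ContinuousAt] using hc
    have := this.eventually hm
    filter_upwards [this] with s hs
    simpa [hG] using hs
  have hder : deriv G =ᶠ[𝓝 0] φ := by
    filter_upwards [h1] with s hs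
    exact hs.deriv
  have hdd : deriv (deriv G) 0 = d := by rw [hder.deriv_eq]; exact h2.deriv
  have hmin : IsLocalMin G 0 :=
    isLocalMin_of_deriv_deriv_pos (by rw [hdd]; exact hd) hmax.deriv_eq_zero
      h1.self_of_nhds.continuousAt
  have hconst : G =ᶠ[𝓝 0] fun _ => G 0 := by
    filter_upwards [hmax, hmin] with s h h' using le_antisymm h h'
  have h0 : φ =ᶠ[𝓝 0] fun _ => (0 : ℝ) := by
    refine hder.symm.trans ?_
    filter_upwards [hconst.eventuallyEq_nhds] with s hs
    rw [hs.deriv_eq]; simp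
  have := h2.deriv
  rw [h0.deriv_eq] at this
  simp at this
  linarith

/-- Second line derivatives of the barrier `1 + |x|^{-δ}`. -/
lemma lineD2_barrier {N : ℕ} (q : ℝ) {x : Euc N} (hx : x ≠ 0) (i : Fin N) :
    LineD2 (fun y : Euc N => 1 + (‖y‖ ^ 2) ^ q) x (EuclideanSpace.single i 1)
      (2 * q * (‖x‖ ^ 2) ^ (q - 1) + 4 * q * (q - 1) * (x i) ^ 2 * (‖x‖ ^ 2) ^ (q - 2)) := by
  have hn : ∀ s : ℝ, ‖x + s • EuclideanSpace.single i (1 : ℝ)‖ ^ 2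
      = ‖x‖ ^ 2 + 2 * s * x i + s ^ 2 := by
    intro s
    rw [norm_add_sq_real, inner_smul_right, norm_smul, EuclideanSpace.inner_single_right]
    simp
    ring
  have hp : ∀ s : ℝ, HasDerivAt (fun s : ℝ => ‖x‖ ^ 2 + 2 * s * x i + s ^ 2)
      (2 * x i + 2 * s) s := by
    intro s
    have h1 := (((hasDerivAt_id s).const_mul 2).mul_const (x i)).const_add (‖x‖ ^ 2)
    have h2 := hasDerivAt_pow 2 s
    exact (h1.add h2).congr_deriv (by simp)
  have hx0 : 0 < ‖x‖ ^ 2 := by positivity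
  have hev : ∀ᶠ s : ℝ in 𝓝 0, 0 < ‖x‖ ^ 2 + 2 * s * x i + s ^ 2 := by
    have hc : ContinuousAt (fun s : ℝ => ‖x‖ ^ 2 + 2 * s * x i + s ^ 2) 0 :=
      (hp 0).continuousAt
    exact hc.eventually (lt_mem_nhds (by simpa using hx0))
  refine ⟨fun s => (2 * x i + 2 * s) * q * (‖x‖ ^ 2 + 2 * s * x i + s ^ 2) ^ (q - 1), ?_, ?_⟩
  · filter_upwards [hev] with s hs
    simp only [hn]
    exact ((hp s).rpow_const (Or.inl hs.ne')).const_add 1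
  · have h1 : HasDerivAt (fun s : ℝ => (2 * x i + 2 * s) * q) (2 * q) 0 := by
      have := (((hasDerivAt_id (0 : ℝ)).const_mul 2).const_add (2 * x i)).mul_const q
      simpa using this
    have h2 := (hp 0).rpow_const (p := q - 1) (Or.inl (by simpa using hx0.ne'))
    refine (h1.mul h2).congr_deriv ?_
    have : q - 1 - 1 = q - 2 := by ring
    rw [this]
    simp
    ring

/-- The pointwise contradiction at a touching point. -/
lemma touching {N : ℕ} {V : Euc N → ℝ} {f : ℝ → ℝ} {lam : ℝ} {u v : Euc N → ℝ}
    (hl : 0 < lam) (hmono : StrictMonoOn (fun u : ℝ => f u / u) (Ioi 0))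
    (hu : IsSolution N V f lam u) (hv : IsSolution N V f lam v)
    {Z : Euc N → ℝ} {x : Euc N} {d : Fin N → ℝ} {t : ℝ} (ht : 1 < t)
    (hZd : ∀ i, LineD2 Z x (EuclideanSpace.single i 1) (d i))
    (hZ : lam * (V x * Z x - Z x * (f (v x) / v x)) ≤ -∑ i, d i)
    (hvZ : v x ≤ Z x) (hux : u x = t * Z x)
    (hm : IsLocalMax (fun y => u y + (-t) * Z y) x) : False := by
  have h1 : ∀ i : Fin N, fderiv ℝ (fun y => fderiv ℝ u y (EuclideanSpace.single i 1)) x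
      (EuclideanSpace.single i 1) + (-t) * d i ≤ 0 := fun i =>
    ((lineD2_of_contDiff hu.smooth x _).add ((hZd i).const_mul (-t))).nonpos hm
  have h2 : lap N u x + (-t) * ∑ i, d i ≤ 0 := by
    unfold lap
    rw [Finset.mul_sum, ← Finset.sum_add_distrib]
    exact Finset.sum_nonpos fun i _ => h1 i
  have h3 := hu.eqn x
  have hvx := hv.pos x
  have hup := hu.pos x
  have hlt : v x < u x := by rw [hux]; nlinarith
  have h4 : f (v x) / v x < f (u x) / u x := hmono hvx hup hlt
  have h5 : f (u x) = u x * (f (u x) / u x) := by field_simp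
  have h6 : u x * (f (v x) / v x) < f (u x) := by
    rw [h5]; exact mul_lt_mul_of_pos_left h4 hup
  have h7 := mul_le_mul_of_nonneg_left hZ (by linarith : (0 : ℝ) ≤ t)
  have h8 : t * (lam * (V x * Z x - Z x * (f (v x) / v x)))
      = lam * (V x * u x - u x * (f (v x) / v x)) := by rw [hux]; ring
  have h9 := mul_lt_mul_of_pos_left h6 hl
  nlinarith

lemma lam_nonneg (N : ℕ) (V : Euc N → ℝ) (hc : Continuous V) (hp : ∃ x, 0 < V x) :
    0 ≤ Lam N V := by
  set S : ℝ → Set ℝ := fun R => { t : ℝ | ∃ u : Euc N → ℝ, ContDiff ℝ (⊤ : ℕ∞) u ∧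
    HasCompactSupport u ∧ tsupport u ⊆ ball (0 : Euc N) R ∧
    (∫ x, V x * u x ^ 2) = 1 ∧ t = ∫ x, ‖gradient u x‖ ^ 2 } with hS
  have hlamS : ∀ R, lam1 N V R = sInf (S R) := fun R => rfl
  have hS0 : ∀ R, ∀ t ∈ S R, 0 ≤ t := by
    rintro R t ⟨u, -, -, -, -, rfl⟩
    exact integral_nonneg fun x => by positivity
  have hSm : Monotone S := by
    rintro R R' h t ⟨u, h1, h2, h3, h4⟩
    exact ⟨u, h1, h2, h3.trans (ball_subset_ball h), h4⟩
  have hnn : ∀ R, 0 ≤ lam1 N V R := fun R => Real.sInf_nonneg (hS0 R)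
  have hne : ∃ R, (S R).Nonempty := by
    obtain ⟨x₀, hx₀⟩ := hp
    obtain ⟨r, hr, hrV⟩ := Metric.eventually_nhds_iff_ball.1
      (hc.continuousAt.eventually (lt_mem_nhds hx₀))
    let b : ContDiffBump x₀ := ⟨r / 4, r / 2, by positivity, by linarith⟩
    have hbc : ContDiff ℝ (⊤ : ℕ∞) (b : Euc N → ℝ) := b.contDiff
    have hcont : Continuous (fun x => V x * b x ^ 2) := hc.mul (b.continuous.pow 2)
    have hsup : HasCompactSupport (fun x => V x * b x ^ 2) := by
      have : HasCompactSupport (fun x => b x ^ 2) := by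
        simp only [pow_two]
        exact b.hasCompactSupport.mul_left (f := b)
      exact this.mul_left
    have hI : 0 < ∫ x, V x * b x ^ 2 := by
      refine hcont.integral_pos_of_hasCompactSupport_nonneg_nonzero hsup ?_ (x := x₀) ?_
      · intro x
        by_cases hx : x ∈ ball x₀ r
        · exact mul_nonneg (hrV x hx).le (sq_nonneg _)
        · have : b x = 0 := b.zero_of_le_dist (by
            simp only [mem_ball, not_lt] at hx
            change r / 2 ≤ _
            linarith)
          simp [this]
      · have : b x₀ = 1 := b.one_of_mem_closedBall (by simp [b.rIn_pos.le])
        simp [this, hx₀.ne']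
    set I := ∫ x, V x * b x ^ 2
    refine ⟨‖x₀‖ + r, _, fun x => (Real.sqrt I)⁻¹ * b x, contDiff_const.mul hbc,
      b.hasCompactSupport.mul_left, ?_, ?_, rfl⟩
    · refine (tsupport_mul_subset_right).trans ?_
      rw [b.tsupport_eq]
      intro y hy
      have h1 : dist y x₀ ≤ r / 2 := hy
      rw [mem_ball]
      have := dist_triangle y x₀ 0
      rw [dist_zero_right x₀] at this
      linarith
    · have : ∀ x, V x * ((Real.sqrt I)⁻¹ * b x) ^ 2 = I⁻¹ * (V x * b x ^ 2) := by
        intro x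
        rw [mul_pow, inv_pow, Real.sq_sqrt hI.le]; ring
      simp only [this]
      rw [integral_const_mul]
      exact inv_mul_cancel₀ hI.ne'
  obtain ⟨R₀, hR₀⟩ := hne
  have hanti : Antitone (fun R => lam1 N V (max R R₀)) := by
    intro R R' h
    simp only [hlamS]
    exact csInf_le_csInf ⟨0, fun t ht => hS0 _ t ht⟩
      (hR₀.mono (hSm (le_max_right _ _))) (hSm (max_le_max_right _ h))
  have hbdd : BddBelow (range fun R => lam1 N V (max R R₀)) :=
    ⟨0, by rintro _ ⟨R, rfl⟩; exact hnn _⟩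
  have ht := tendsto_atTop_ciInf hanti hbdd
  have ht' : Tendsto (lam1 N V) atTop (𝓝 (⨅ R, lam1 N V (max R R₀))) := by
    refine ht.congr' ?_
    filter_upwards [eventually_ge_atTop R₀] with R hR
    rw [max_eq_left hR]
  unfold Lam
  rw [ht'.limUnder_eq]
  exact le_ciInf fun R => hnn _

/-- Existence of the barrier outside of a large ball. -/
lemma barrier_exists (N : ℕ) (hN : 3 ≤ N) (V : Euc N → ℝ) (hdec : CondVDecay N V)
    (lam : ℝ) (hl : 0 < lam) :
    ∃ (R : ℝ) (h : Euc N → ℝ) (d : Euc N → Fin N → ℝ), 0 < R ∧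
      (∀ x, 1 ≤ h x) ∧ ContinuousOn h {x | R ≤ ‖x‖} ∧
      ∀ x, R ≤ ‖x‖ → (∀ i, LineD2 h x (EuclideanSpace.single i 1) (d x i)) ∧
        lam * (V x * h x) ≤ -∑ i, d x i := by
  obtain ⟨A, α, hA, hα, hVA⟩ := hdec
  set δ : ℝ := min α 1 / 2 with hδ
  have hδ0 : 0 < δ := by positivity
  have hδα : δ < α := by have := min_le_left α 1; rw [hδ]; linarith
  have hδ1 : δ ≤ 1 / 2 := by have := min_le_right α 1; rw [hδ]; linarith
  have hlim : Tendsto (fun r : ℝ => r ^ (-(α - δ))) atTop (𝓝 0) :=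
    tendsto_rpow_neg_atTop (by linarith)
  have hc0 : 0 < δ / (4 * lam * A) := by positivity
  obtain ⟨R, hR1, hR⟩ : ∃ R : ℝ, 1 ≤ R ∧ ∀ r, R ≤ r → r ^ (-(α - δ)) < δ / (4 * lam * A) := by
    obtain ⟨R, hR⟩ := eventually_atTop.1 (hlim.eventually (gt_mem_nhds hc0))
    exact ⟨max R 1, le_max_right _ _, fun r hr => hR r ((le_max_left _ _).trans hr)⟩
  have hne : ∀ x : Euc N, R ≤ ‖x‖ → x ≠ 0 := by
    rintro x hx rfl
    simp at hx; linarith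
  refine ⟨R, fun y => 1 + (‖y‖ ^ 2) ^ (-δ / 2), fun x i =>
    2 * (-δ / 2) * (‖x‖ ^ 2) ^ (-δ / 2 - 1)
      + 4 * (-δ / 2) * (-δ / 2 - 1) * (x i) ^ 2 * (‖x‖ ^ 2) ^ (-δ / 2 - 2),
    by linarith, ?_, ?_, ?_⟩
  · intro x
    have : 0 ≤ (‖x‖ ^ 2) ^ (-δ / 2) := by positivity
    linarith
  · refine continuousOn_const.add (ContinuousOn.rpow_const (by fun_prop) ?_)
    intro x hx
    left
    have := norm_pos_iff.2 (hne x hx)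
    positivity
  · intro x hx
    have hx0 := hne x hx
    have hxn : 0 < ‖x‖ := norm_pos_iff.2 hx0
    refine ⟨fun i => lineD2_barrier _ hx0 i, ?_⟩
    rw [Finset.sum_add_distrib, Finset.sum_const, ← Finset.sum_mul, ← Finset.mul_sum,
      ← EuclideanSpace.real_norm_sq_eq]
    have e1 : ‖x‖ ^ 2 * (‖x‖ ^ 2) ^ (-δ / 2 - 2) = (‖x‖ ^ 2) ^ (-δ / 2 - 1) := by
      have : (-δ / 2 - 1) = 1 + (-δ / 2 - 2) := by ring
      rw [this, Real.rpow_add (by positivity), Real.rpow_one]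
    have e2 : (‖x‖ ^ 2) ^ (-δ / 2 - 1) = ‖x‖ ^ (-δ - 2) := by
      rw [← Real.rpow_natCast, ← Real.rpow_mul hxn.le]
      congr 1; push_cast; ring
    have e3 : (‖x‖ ^ 2) ^ (-δ / 2) ≤ 1 :=
      Real.rpow_le_one_of_one_le_of_nonpos (by nlinarith) (by linarith)
    have e3' : 0 ≤ (‖x‖ ^ 2) ^ (-δ / 2) := by positivity
    have e4 : ‖x‖ ^ (-2 - α) = ‖x‖ ^ (-(α - δ)) * ‖x‖ ^ (-δ - 2) := by
      rw [← Real.rpow_add hxn]; congr 1; ring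
    set s := ‖x‖ ^ (-δ - 2) with hs
    have hs0 : 0 < s := by positivity
    have e5 := hVA x hx0
    have e6 : V x ≤ A * ‖x‖ ^ (-2 - α) := (le_max_left _ _).trans e5
    have e7 : V x * (1 + (‖x‖ ^ 2) ^ (-δ / 2)) ≤ 2 * (A * ‖x‖ ^ (-2 - α)) := by
      have : 0 ≤ A * ‖x‖ ^ (-2 - α) := by positivity
      nlinarith
    have e8 : lam * (2 * (A * ‖x‖ ^ (-2 - α))) ≤ δ / 2 * s := by
      rw [e4]
      have h := (hR _ hx).le
      rw [le_div_iff₀ (by positivity)] at h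
      nlinarith
    have e9 : 4 * (-δ / 2) * (-δ / 2 - 1) * ‖x‖ ^ 2 * (‖x‖ ^ 2) ^ (-δ / 2 - 2)
        = δ * (δ + 2) * s := by
      rw [mul_assoc, e1, e2]; ring
    have hN' : (3 : ℝ) ≤ N := by exact_mod_cast hN
    rw [e9, e2]
    simp only [Finset.card_univ, Fintype.card_fin, nsmul_eq_mul]
    have e10 : δ / 2 * s ≤ δ * ((N : ℝ) - 2 - δ) * s := by
      have : δ / 2 ≤ δ * ((N : ℝ) - 2 - δ) := by nlinarith
      nlinarith
    have e11 := mul_le_mul_of_nonneg_left e7 hl.le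
    nlinarith

lemma solution_le (N : ℕ) (hN : 3 ≤ N) (V : Euc N → ℝ) (hdec : CondVDecay N V)
    (f : ℝ → ℝ) (hf0 : ∀ u : ℝ, 0 ≤ u → 0 ≤ f u)
    (hmono : StrictMonoOn (fun u : ℝ => f u / u) (Ioi 0)) (lam : ℝ) (hl : 0 < lam)
    (u v : Euc N → ℝ) (hu : IsSolution N V f lam u) (hv : IsSolution N V f lam v) :
    ∀ x, u x ≤ v x := by
  obtain ⟨R, h, d, hR0, hh1, hhc, hhd⟩ := barrier_exists N hN V hdec lam hl
  have huc := hu.smooth.continuous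
  have hvc := hv.smooth.continuous
  have hqc : Continuous (fun x => u x / v x) := huc.div hvc fun x => (hv.pos x).ne'
  obtain ⟨x₁, hx₁, hmax⟩ := (isCompact_closedBall (0 : Euc N) R).exists_isMaxOn
    ⟨0, by simp [hR0.le]⟩ hqc.continuousOn
  set M := max 1 (u x₁ / v x₁) with hM
  have hM1 : 1 ≤ M := le_max_left _ _
  have hin : ∀ x, ‖x‖ ≤ R → u x ≤ M * v x := by
    intro x hx
    have h1 : u x / v x ≤ u x₁ / v x₁ := hmax (by simpa using hx)
    rw [← div_le_iff₀ (hv.pos x)]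
    exact h1.trans (le_max_right _ _)
  -- exterior comparison
  have hout : ∀ ε : ℝ, 0 < ε → ∀ x, R ≤ ‖x‖ → u x ≤ M * v x + ε * h x := by
    intro ε hε y hy
    by_contra! hcon
    set Z : Euc N → ℝ := fun x => M * v x + ε * h x with hZ
    have hZε : ∀ x, ε ≤ Z x := fun x => by
      have h1 := hh1 x
      have h2 := hv.pos x
      have : 0 ≤ M * v x := by positivity
      simp only [hZ]; nlinarith
    have hZ0 : ∀ x, 0 < Z x := fun x => hε.trans_le (hZε x)
    have hZM : ∀ x, M * v x < Z x := fun x => by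
      have : 0 < ε * h x := mul_pos hε (by linarith [hh1 x])
      simp only [hZ]; linarith
    have hZc : ContinuousOn Z {x | R ≤ ‖x‖} :=
      (continuousOn_const.mul hvc.continuousOn).add (continuousOn_const.mul hhc)
    have hQc : ContinuousOn (fun x => u x / Z x) {x | R ≤ ‖x‖} :=
      huc.continuousOn.div hZc fun x _ => (hZ0 x).ne'
    have hclosed : IsClosed {x : Euc N | R ≤ ‖x‖} := isClosed_le continuous_const continuous_norm
    have hQy : 1 < u y / Z y := by rw [one_lt_div (hZ0 y)]; exact hcon
    have hfar : ∀ᶠ x in cocompact (Euc N) ⊓ 𝓟 {x | R ≤ ‖x‖}, u x / Z x ≤ u y / Z y := by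
      refine Filter.Eventually.filter_mono inf_le_left ?_
      filter_upwards [hu.decay.eventually (gt_mem_nhds hε)] with x hx
      have : u x / Z x ≤ 1 := by
        rw [div_le_one (hZ0 x)]; exact hx.le.trans (hZε x)
      linarith
    obtain ⟨x₀, hx₀, hx₀m⟩ := hQc.exists_isMaxOn' hclosed hy hfar
    set t := u x₀ / Z x₀ with ht
    have ht1 : 1 < t := hQy.trans_le (hx₀m hy)
    have hux : u x₀ = t * Z x₀ := by rw [ht]; field_simp [(hZ0 x₀).ne']
    have hx₀R : R < ‖x₀‖ := by
      refine lt_of_le_of_ne hx₀ fun heq => ?_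
      have h1 := hin x₀ heq.ge
      have h2 := hZM x₀
      have : Z x₀ < u x₀ := by rw [hux]; nlinarith [hZ0 x₀]
      linarith
    have hloc : IsLocalMax (fun y => u y + (-t) * Z y) x₀ := by
      have : ∀ᶠ x : Euc N in 𝓝 x₀, R < ‖x‖ :=
        continuous_norm.continuousAt.eventually (lt_mem_nhds hx₀R)
      filter_upwards [this] with x hx
      have h1 : u x / Z x ≤ t := hx₀m (le_of_lt hx : R ≤ ‖x‖)
      rw [div_le_iff₀ (hZ0 x)] at h1
      linarith
    obtain ⟨hd1, hd2⟩ := hhd x₀ hx₀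
    have hvp := hv.pos x₀
    refine touching hl hmono hu hv ht1
      (fun i => ((lineD2_of_contDiff hv.smooth x₀ _).const_mul M).add ((hd1 i).const_mul ε))
      ?_ ?_ hux hloc
    · rw [Finset.sum_add_distrib, ← Finset.mul_sum, ← Finset.mul_sum]
      change _ ≤ -(M * lap N v x₀ + ε * ∑ i, d x₀ i)
      have h1 := hv.eqn x₀
      have h2 : f (v x₀) = v x₀ * (f (v x₀) / v x₀) := by field_simp
      have h3 : 0 ≤ f (v x₀) / v x₀ := div_nonneg (hf0 _ hvp.le) hvp.le
      set k := f (v x₀) / v x₀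
      rw [h2] at h1
      have h4 := mul_le_mul_of_nonneg_left hd2 hε.le
      have h5 : lap N v x₀ = -(lam * (V x₀ * v x₀ - v x₀ * k)) := by linarith
      have h6 : 0 ≤ lam * (ε * h x₀) * k := by
        have := hh1 x₀
        have : 0 ≤ h x₀ := by linarith
        positivity
      rw [h5]
      nlinarith
    · have := hZM x₀
      nlinarith
  have hall : ∀ x, u x ≤ M * v x := by
    intro x
    rcases le_total ‖x‖ R with hx | hx
    · exact hin x hx
    · refine le_of_forall_pos_le_add fun ε hε => ?_
      have hp : 0 < h x := by linarith [hh1 x]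
      have := hout (ε / h x) (by positivity) x hx
      rwa [div_mul_cancel₀ _ hp.ne'] at this
  by_cases hM' : M = 1
  · intro x; have := hall x; rwa [hM', one_mul] at this
  · exfalso
    have hM1' : 1 < M := lt_of_le_of_ne hM1 (Ne.symm hM')
    have hMx : M = u x₁ / v x₁ := by
      rcases max_choice 1 (u x₁ / v x₁) with h' | h'
      · exact absurd h' hM'
      · exact h'
    have hvp := hv.pos x₁
    have hux : u x₁ = M * v x₁ := by rw [hMx]; field_simp
    refine touching hl hmono hu hv hM1' (fun i => lineD2_of_contDiff hv.smooth x₁ _) ?_ le_rfl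
      hux ?_
    · change _ ≤ -lap N v x₁
      rw [hv.eqn x₁, mul_div_cancel₀ _ hvp.ne']
    · refine Eventually.of_forall fun x => ?_
      have := hall x
      change u x + -M * v x ≤ u x₁ + -M * v x₁
      linarith

/-- for every `λ > Λ`, problem `(P_λ)` has at most one solution. -/
theorem stmt2 (N : ℕ) (hN : 3 ≤ N) (V V₁ V₂ : Euc N → ℝ)
    (hV : CondV N V V₁ V₂) (hdec : CondVDecay N V)
    (f : ℝ → ℝ) (hf : CondF N V f)
    (lam : ℝ) (hlam : Lam N V < lam)
    (u v : Euc N → ℝ) (hu : IsSolution N V f lam u) (hv : IsSolution N V f lam v) :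
    u = v := by
  obtain ⟨⟨C, β, hβ, -, hH⟩, -, hpos, -⟩ := hV
  have hl : 0 < lam := (lam_nonneg N V (hH.continuous hβ) hpos).trans_lt hlam
  obtain ⟨-, hf0, -, -, -, hmono, -⟩ := hf
  funext x
  exact le_antisymm (solution_le N hN V hdec f hf0 hmono lam hl u v hu hv x)
    (solution_le N hN V hdec f hf0 hmono lam hl v u hv hu x)

end
end
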